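/- arXiv:1612.08310 — 2 statements merged into one kernel-verified Lean document; each statement's English description precedes it below -/
import Mathlib

section
/- Let d ≥ 1, σ ∈ (0,1), 0 < λ ≤ Λ < ∞, and let 𝒜 be a nonempty index set. Assume: (a) for each β ∈ 𝒜, λ ≤ a_β(x,y) ≤ Λ, a_β is measurable in y, and |a_β(x,y) − a_β(x',y)| ≤ Λ ω_a(|x − x'|) for all x, x', y, where ω_a is a Dini function; (b) each f_β : B_1 → ℝ satisfies |f_β(x) − f_β(x')| ≤ ω_f(|x − x'|) for x, x' ∈ B_1 with ω_f a Dini function, and sup_{β∈𝒜} ‖f_β‖_{L_∞(B_1)} < ∞; (c) u : ℝ^d → ℝ is bounded, |u(x) − u(x')| ≤ ω_u(|x − x'|) for all x, x' ∈ ℝ^d with ω_u a Dini function, and [u]_{σ+ε;B_1} < ∞ for some ε ∈ (0, 1−σ); (d) u solves inf_{β∈𝒜}(L_β u + f_β) = 0 in B_1. Then there exists a constant C > 0 depending only on d, σ, λ, Λ, ω_a such that [u]_{σ;B_{1/2}} ≤ C‖u‖_{L_∞(ℝ^d)} + C sup_{β∈𝒜}‖f_β‖_{L_∞(B_1)} +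 C Σ_{j=1}^∞ (ω_u(2^{−j}) + ω_f(2^{−j})). Moreover, sup_{x_0 ∈ B_{1/2}} [u]_{σ;B_r(x_0)} → 0 as r → 0+. -/
open MeasureTheory Metric Filter Set
open scoped ENNReal Topology

noncomputable section

/-- Hölder seminorm `[u]_{γ;Ω}` (valued in `ℝ≥0∞`). -/
def holderSemi {E F : Type*} [NormedAddCommGroup E] [NormedAddCommGroup F]
    (γ : ℝ) (Ω : Set E) (u : E → F) : ℝ≥0∞ :=
  ⨆ (x : E) (_ : x ∈ Ω) (y : E) (_ : y ∈ Ω) (_ : x ≠ y),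
    ENNReal.ofReal (‖u x - u y‖ / ‖x - y‖ ^ γ)

/-- Zygmund seminorm `[u]_{Λ^α(Ω)}` (valued in `ℝ≥0∞`). -/
def zygmundSemi {E : Type*} [NormedAddCommGroup E] (α : ℝ) (Ω : Set E) (u : E → ℝ) : ℝ≥0∞ :=
  ⨆ (x : E) (h : E) (_ : h ≠ 0) (_ : x ∈ Ω) (_ : x + h ∈ Ω) (_ : x - h ∈ Ω),
    ENNReal.ofReal (|u (x + h) + u (x - h) - 2 * u x| / ‖h‖ ^ α)

/-- The `L_∞` norm of `u` on `Ω` (valued in `ℝ≥0∞`). -/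
def eSupNorm {E : Type*} (Ω : Set E) (u : E → ℝ) : ℝ≥0∞ :=
  ⨆ (x : E) (_ : x ∈ Ω), ENNReal.ofReal |u x|

/-- A Dini function: nonnegative, nondecreasing on `(0,∞)`, with `∫_0^1 ω(r)/r dr < ∞`. -/
def IsDini (ω : ℝ → ℝ) : Prop :=
  (∀ r, 0 < r → 0 ≤ ω r) ∧ MonotoneOn ω (Set.Ioi (0:ℝ)) ∧
    IntegrableOn (fun r => ω r / r) (Set.Ioc (0:ℝ) 1)

/-- The ambient Euclidean space. -/
abbrev EE (d : ℕ) := EuclideanSpace ℝ (Fin d)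

/-- The model kernel. -/
def kker (d : ℕ) (σ : ℝ) (y : EE d) : ℝ := ‖y‖ ^ (-(d:ℝ) - σ)

lemma kker_nonneg (d : ℕ) (σ : ℝ) (y : EE d) : 0 ≤ kker d σ y :=
  Real.rpow_nonneg (norm_nonneg _) _

lemma kker_measurable (d : ℕ) (σ : ℝ) : Measurable (kker d σ) := by
  unfold kker; fun_prop

/-- The truncated-cone profile at scale `R`. -/
def cone (d : ℕ) (R : ℝ) (y : EE d) : ℝ := min (‖y‖ / R) 1

lemma cone_nonneg {d : ℕ} {R : ℝ} (hR : 0 < R) (y : EE d) : 0 ≤ cone d R y :=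
  le_min (div_nonneg (norm_nonneg _) hR.le) zero_le_one

lemma cone_ker_integrable_one (d : ℕ) (hd : 1 ≤ d) (σ : ℝ) (h0 : 0 < σ) (h1 : σ < 1) :
    Integrable (fun y : EE d => cone d 1 y * kker d σ y) := by
  have : Nonempty (Fin d) := ⟨⟨0, hd⟩⟩
  have : Nontrivial (EE d) := inferInstance
  unfold cone kker
  have := (integrable_fun_norm_addHaar (E := EE d) volume
    (f := fun t : ℝ => min (t / 1) 1 * t ^ (-(d:ℝ) - σ))).2
  apply this
  rw [← Set.Ioc_union_Ioi_eq_Ioi (zero_le_one (α := ℝ)), integrableOn_union]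
  simp only [finrank_euclideanSpace, Fintype.card_fin, smul_eq_mul, div_one]
  have key : ∀ t : ℝ, 0 < t → t ^ (d - 1) * t ^ (-(d:ℝ) - σ) = t ^ (-1 - σ) := by
    intro t ht
    rw [← Real.rpow_natCast, ← Real.rpow_add ht]
    congr 1
    push_cast [Nat.cast_sub hd]; ring
  constructor
  · have h : IntegrableOn (fun t : ℝ => t ^ (-σ)) (Set.Ioc 0 1) := by
      have := intervalIntegral.intervalIntegrable_rpow' (a := 0) (b := 1) (r := -σ) (by linarith)
      rwa [intervalIntegrable_iff_integrableOn_Ioc_of_le zero_le_one] at this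
    refine h.congr_fun ?_ measurableSet_Ioc
    intro t ht
    have ht0 := ht.1
    simp only
    rw [min_eq_left ht.2, mul_left_comm, key t ht0]
    nth_rewrite 2 [← Real.rpow_one t]
    rw [← Real.rpow_add ht0]; congr 1; ring
  · have h : IntegrableOn (fun t : ℝ => t ^ (-1 - σ)) (Set.Ioi 1) :=
      integrableOn_Ioi_rpow_of_lt (by linarith) one_pos
    refine h.congr_fun ?_ measurableSet_Ioi
    intro t ht
    have ht1 : 1 < t := ht
    simp only
    rw [min_eq_right ht1.le, one_mul, key t (by linarith)]

lemma cone_ker_scale (d : ℕ) (σ R : ℝ) (hR : 0 < R) (y : EE d) :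
    cone d R y * kker d σ y
      = R ^ (-(d:ℝ) - σ) * (cone d 1 (R⁻¹ • y) * kker d σ (R⁻¹ • y)) := by
  unfold cone kker
  rw [norm_smul, Real.norm_of_nonneg (inv_nonneg.2 hR.le),
    Real.mul_rpow (inv_nonneg.2 hR.le) (norm_nonneg _), Real.inv_rpow hR.le]
  have : R ^ (-(d:ℝ) - σ) ≠ 0 := (Real.rpow_pos_of_pos hR _).ne'
  rw [div_one, inv_mul_eq_div]
  field_simp

lemma cone_ker_integrable (d : ℕ) (hd : 1 ≤ d) (σ : ℝ) (h0 : 0 < σ) (h1 : σ < 1)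
    (R : ℝ) (hR : 0 < R) :
    Integrable (fun y : EE d => cone d R y * kker d σ y) := by
  simp_rw [cone_ker_scale d σ R hR]
  apply Integrable.const_mul
  exact (integrable_comp_smul_iff volume (fun y : EE d => cone d 1 y * kker d σ y)
    (inv_ne_zero hR.ne')).2 (cone_ker_integrable_one d hd σ h0 h1)

/-- The basic kernel constant. -/
def cK (d : ℕ) (σ : ℝ) : ℝ := ∫ y : EE d, cone d 1 y * kker d σ y

lemma cK_nonneg (d : ℕ) (σ : ℝ) : 0 ≤ cK d σ :=
  integral_nonneg fun y => mul_nonneg (cone_nonneg one_pos y) (kker_nonneg d σ y)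

lemma cone_ker_integral (d : ℕ) (σ : ℝ) (R : ℝ) (hR : 0 < R) :
    ∫ y : EE d, cone d R y * kker d σ y = cK d σ * R ^ (-σ) := by
  simp_rw [cone_ker_scale d σ R hR]
  rw [integral_const_mul,
    Measure.integral_comp_inv_smul volume (fun y : EE d => cone d 1 y * kker d σ y) R]
  simp only [finrank_euclideanSpace, Fintype.card_fin, smul_eq_mul]
  rw [abs_of_pos (pow_pos hR d), ← mul_assoc, ← Real.rpow_natCast, ← Real.rpow_add hR, mul_comm]
  unfold cK; congr 2; ring

/-- Averaging: if `G ≥ 0` has small weighted integral, then for some `y` near `0`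
both `G y` and `G (y+h)` are small. -/
lemma averaging (d : ℕ) (hd : 1 ≤ d) (σ : ℝ) (h0 : 0 < σ) :
    ∃ c : ℝ, 0 < c ∧ ∀ (G : EE d → ℝ) (Q r : ℝ) (h : EE d), (∀ y, 0 ≤ G y) →
      Integrable (fun y => G y * kker d σ y) → ∫ y, G y * kker d σ y ≤ Q → 0 < r → ‖h‖ ≤ r →
      ∃ y, ‖y‖ < r ∧ G y + G (y + h) ≤ c * (r ^ σ * Q) := by
  have : Nonempty (Fin d) := ⟨⟨0, hd⟩⟩
  have : Nontrivial (EE d) := inferInstance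
  set v : ℝ := (volume (ball (0 : EE d) 1)).toReal with hv
  have hvpos : 0 < v := ENNReal.toReal_pos (measure_ball_pos volume _ one_pos).ne'
    measure_ball_lt_top.ne
  refine ⟨2 * 2 ^ ((d:ℝ) + σ) / v, by positivity, ?_⟩
  intro G Q r h hG hint hQ hr hh
  have hnull : ∀ᵐ y : EE d, y ≠ 0 := by
    rw [ae_iff]; simp
  set B := (2 * r) ^ ((d:ℝ) + σ) with hB
  have hBpos : 0 < B := by positivity
  -- pointwise bound on the big ball
  have hpt : ∀ y : EE d, y ≠ 0 → y ∈ ball (0 : EE d) (2 * r) → G y ≤ B * (G y * kker d σ y) := by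
    intro y hy hyb
    have hy0 : 0 < ‖y‖ := norm_pos_iff.2 hy
    have hy1 : ‖y‖ ≤ 2 * r := by simpa using (mem_ball_zero_iff.1 hyb).le
    have : 1 ≤ B * kker d σ y := by
      have e : kker d σ y = (‖y‖ ^ ((d:ℝ) + σ))⁻¹ := by
        unfold kker; rw [← Real.rpow_neg hy0.le]; congr 1; ring
      rw [e, ← div_eq_mul_inv, one_le_div (by positivity)]
      exact Real.rpow_le_rpow hy0.le hy1 (by positivity)
    nlinarith [hG y]
  have hGm : AEStronglyMeasurable G volume := by
    have h1 : AEStronglyMeasurable (fun y => (G y * kker d σ y) * (kker d σ y)⁻¹) volume :=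
      hint.aestronglyMeasurable.mul (kker_measurable d σ).inv.aestronglyMeasurable
    refine h1.congr ?_
    filter_upwards [hnull] with y hy
    have : kker d σ y ≠ 0 := (Real.rpow_pos_of_pos (norm_pos_iff.2 hy) _).ne'
    field_simp
  have hGi : IntegrableOn G (ball 0 (2 * r)) := by
    refine Integrable.mono' (hint.const_mul B).integrableOn hGm.restrict ?_
    filter_upwards [ae_restrict_mem measurableSet_ball, ae_restrict_of_ae hnull] with y hy hy0
    rw [Real.norm_of_nonneg (hG y)]; exact hpt y hy0 hy
  have hIle : ∫ y in ball 0 (2 * r), G y ≤ B * Q := by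
    calc ∫ y in ball 0 (2 * r), G y ≤ ∫ y in ball 0 (2 * r), B * (G y * kker d σ y) := by
          refine integral_mono_ae hGi (hint.const_mul B).integrableOn ?_
          filter_upwards [ae_restrict_mem measurableSet_ball, ae_restrict_of_ae hnull] with y hy hy0
          exact hpt y hy0 hy
      _ ≤ ∫ y, B * (G y * kker d σ y) := by
          refine setIntegral_le_integral (hint.const_mul B) (ae_of_all _ fun y => ?_)
          exact mul_nonneg hBpos.le (mul_nonneg (hG y) (kker_nonneg d σ y))
      _ = B * ∫ y, G y * kker d σ y := integral_const_mul _ _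
      _ ≤ B * Q := by gcongr
  have hs1 : ball (0 : EE d) r ⊆ ball 0 (2 * r) := ball_subset_ball (by linarith)
  have hG0 : 0 ≤ᵐ[volume.restrict (ball (0 : EE d) (2 * r))] G := ae_of_all _ hG
  have hI1 : ∫ y in ball 0 r, G y ≤ B * Q :=
    (setIntegral_mono_set hGi hG0 hs1.eventuallyLE).trans hIle
  -- the translated integral
  have hpre : (fun y : EE d => y + h) ⁻¹' (ball h r) = ball 0 r := by
    ext y; simp [dist_eq_norm]
  have hmp : MeasurePreserving (fun y : EE d => y + h) volume volume :=
    measurePreserving_add_right volume h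
  have hme : MeasurableEmbedding (fun y : EE d => y + h) :=
    (Homeomorph.addRight h).measurableEmbedding
  have hs2 : ball h r ⊆ ball (0 : EE d) (2 * r) := by
    apply ball_subset_ball'; rw [dist_zero_right]; linarith
  have hI2 : ∫ y in ball 0 r, G (y + h) ≤ B * Q := by
    rw [← hpre, hmp.setIntegral_preimage_emb hme]
    exact (setIntegral_mono_set hGi hG0 hs2.eventuallyLE).trans hIle
  have hGi2 : IntegrableOn (fun y => G (y + h)) (ball 0 r) := by
    rw [← hpre]
    exact (hmp.integrableOn_comp_preimage hme).2 (hGi.mono_set hs2)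
  have hGi1 : IntegrableOn G (ball 0 r) := hGi.mono_set hs1
  by_contra hcon
  push Not at hcon
  set t := 2 * 2 ^ ((d:ℝ) + σ) / v * (r ^ σ * Q) with ht
  have hvol : (volume (ball (0 : EE d) r)).toReal = r ^ d * v := by
    rw [Measure.addHaar_ball volume _ hr.le, ENNReal.toReal_mul, finrank_euclideanSpace,
      Fintype.card_fin, ENNReal.toReal_ofReal (by positivity)]
  have hlt : t * (r ^ d * v) < ∫ y in ball 0 r, (G y + G (y + h)) := by
    have hc : ∫ y in ball (0 : EE d) r, t = t * (r ^ d * v) := by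
      rw [setIntegral_const, smul_eq_mul, mul_comm, measureReal_def, hvol]
    rw [← hc]
    have hti : IntegrableOn (fun _ : EE d => t) (ball 0 r) :=
      integrableOn_const measure_ball_lt_top.ne
    have hdi : IntegrableOn (fun y => (G y + G (y + h)) - t) (ball 0 r) :=
      (hGi1.add hGi2).sub hti
    have : 0 < ∫ y in ball 0 r, ((G y + G (y + h)) - t) := by
      rw [setIntegral_pos_iff_support_of_nonneg_ae _ hdi]
      · have : Function.support (fun y => (G y + G (y + h)) - t) ∩ ball (0 : EE d) r
            = ball 0 r := by
          apply Set.inter_eq_right.2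
          intro y hy
          have := hcon y (mem_ball_zero_iff.1 hy)
          simp only [Function.mem_support]; linarith
        rw [this]; exact measure_ball_pos volume _ hr
      · filter_upwards [ae_restrict_mem measurableSet_ball] with y hy
        have := hcon y (mem_ball_zero_iff.1 hy)
        simp only [Pi.zero_apply]; linarith
    have e := integral_sub (hGi1.add hGi2) hti
    simp only [Pi.add_apply] at e
    linarith
  rw [integral_add hGi1 hGi2] at hlt
  have hBe : B = 2 ^ ((d:ℝ) + σ) * (r ^ d * r ^ σ) := by
    rw [hB, Real.mul_rpow (by norm_num) hr.le, Real.rpow_add hr, Real.rpow_natCast]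
  have : t * (r ^ d * v) = 2 * (B * Q) := by
    rw [ht, hBe]; field_simp
  linarith

/-- All hypotheses on the data, in real-valued form. -/
structure Hyp (d : ℕ) (σ lam Lam : ℝ) (ωa : ℝ → ℝ) (A : Type) (a : A → EE d → EE d → ℝ)
    (f : A → EE d → ℝ) (u : EE d → ℝ) (ωf ωu : ℝ → ℝ) (M : ℝ) : Prop where
  hd : 1 ≤ d
  hσ0 : 0 < σ
  hσ1 : σ < 1
  hlam : 0 < lam
  hlL : lam ≤ Lam
  hωa : IsDini ωa
  hne : Nonempty A
  hIcc : ∀ β x y, a β x y ∈ Set.Icc lam Lam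
  hmeas : ∀ β x, Measurable (a β x)
  hacont : ∀ β x x' y, x ≠ x' → |a β x y - a β x' y| ≤ Lam * ωa ‖x - x'‖
  hωf : IsDini ωf
  hfcont : ∀ β, ∀ x ∈ ball (0 : EE d) 1, ∀ x' ∈ ball (0 : EE d) 1,
    x ≠ x' → |f β x - f β x'| ≤ ωf ‖x - x'‖
  hM : ∀ x, |u x| ≤ M
  hωu : IsDini ωu
  hucont : ∀ x x' : EE d, x ≠ x' → |u x - u x'| ≤ ωu ‖x - x'‖
  hHol : ∃ H ε : ℝ, 0 ≤ H ∧ 0 < ε ∧ ∀ x ∈ ball (0 : EE d) 1, ∀ x' ∈ ball (0 : EE d) 1,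
    |u x - u x'| ≤ H * ‖x - x'‖ ^ (σ + ε)
  hint : ∀ β, ∀ x ∈ ball (0 : EE d) 1,
    Integrable (fun y => (u (x + y) - u x) * a β x y * kker d σ y)
  hsol : ∀ x ∈ ball (0 : EE d) 1,
    (∀ β, 0 ≤ (∫ y, (u (x + y) - u x) * a β x y * kker d σ y) + f β x) ∧
    (∀ e : ℝ, 0 < e → ∃ β, (∫ y, (u (x + y) - u x) * a β x y * kker d σ y) + f β x < e)

/-- Modulus of continuity of `u` at scale `2^{-k}` on the ball of radius `ρ`. -/
def DD {d : ℕ} (u : EE d → ℝ) (ρ : ℝ) (k : ℕ) : ℝ :=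
  sSup {t | ∃ x h : EE d, ‖x‖ < ρ ∧ ‖h‖ ≤ (1/2 : ℝ) ^ k ∧ t = |u (x + h) - u x|}

lemma DD_nonneg {d : ℕ} (u : EE d → ℝ) (ρ : ℝ) (k : ℕ) : 0 ≤ DD u ρ k := by
  apply Real.sSup_nonneg
  rintro t ⟨x, h, -, -, rfl⟩
  exact abs_nonneg _

lemma DD_le {d : ℕ} (u : EE d → ℝ) (ρ : ℝ) (k : ℕ) (c : ℝ) (hc : 0 ≤ c)
    (h : ∀ x h : EE d, ‖x‖ < ρ → ‖h‖ ≤ (1/2 : ℝ) ^ k → |u (x + h) - u x| ≤ c) :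
    DD u ρ k ≤ c := by
  apply Real.sSup_le _ hc
  rintro t ⟨x, h', hx, hh, rfl⟩
  exact h x h' hx hh

lemma le_DD {d : ℕ} {u : EE d → ℝ} {M : ℝ} (hM : ∀ x, |u x| ≤ M) {ρ : ℝ} {k : ℕ} {x h : EE d}
    (hx : ‖x‖ < ρ) (hh : ‖h‖ ≤ (1/2 : ℝ) ^ k) : |u (x + h) - u x| ≤ DD u ρ k := by
  apply le_csSup
  · refine ⟨2 * M, ?_⟩
    rintro t ⟨x, h', -, -, rfl⟩
    have := abs_sub (u (x + h')) (u x)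
    linarith [hM x, hM (x + h')]
  · exact ⟨x, h, hx, hh, rfl⟩

lemma DD_le_two {d : ℕ} {u : EE d → ℝ} {M : ℝ} (hM : ∀ x, |u x| ≤ M) (ρ : ℝ) (k : ℕ) :
    DD u ρ k ≤ 2 * M := by
  apply DD_le
  · linarith [abs_nonneg (u 0), hM 0]
  · intro x h _ _
    have := abs_sub (u (x + h)) (u x)
    linarith [hM x, hM (x + h)]

section
variable {d : ℕ} {σ lam Lam : ℝ} {ωa : ℝ → ℝ} {A : Type} {a : A → EE d → EE d → ℝ}
  {f : A → EE d → ℝ} {u : EE d → ℝ} {ωf ωu : ℝ → ℝ} {M : ℝ}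

lemma Hyp.intDelta (H : Hyp d σ lam Lam ωa A a f u ωf ωu M) {x : EE d} (hx : ‖x‖ < 1) :
    Integrable (fun y => (u (x + y) - u x) * kker d σ y) := by
  obtain ⟨β⟩ := H.hne
  have h1 := H.hint β x (mem_ball_zero_iff.2 hx)
  have hpos : ∀ y, 0 < a β x y := fun y => H.hlam.trans_le (H.hIcc β x y).1
  have h2 := h1.bdd_mul (f := fun y => (a β x y)⁻¹) (c := lam⁻¹)
    (H.hmeas β x).inv.aestronglyMeasurable (ae_of_all _ fun y => by
      rw [Real.norm_of_nonneg (inv_nonneg.2 (hpos y).le)]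
      exact inv_anti₀ H.hlam (H.hIcc β x y).1)
  refine h2.congr (ae_of_all _ fun y => ?_)
  have := (hpos y).ne'
  simp only
  field_simp

lemma Hyp.intMul (H : Hyp d σ lam Lam ωa A a f u ωf ωu M) {g : EE d → ℝ}
    (hg : Integrable (fun y => g y * kker d σ y)) (β : A) (x : EE d) :
    Integrable (fun y => g y * a β x y * kker d σ y) := by
  have h2 := hg.bdd_mul (f := fun y => a β x y) (c := Lam)
    (H.hmeas β x).aestronglyMeasurable (ae_of_all _ fun y => by
      rw [Real.norm_of_nonneg (H.hlam.le.trans (H.hIcc β x y).1)]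
      exact (H.hIcc β x y).2)
  refine h2.congr (ae_of_all _ fun y => ?_)
  simp only
  ring

lemma Hyp.intW (H : Hyp d σ lam Lam ωa A a f u ωf ωu M) {x h : EE d}
    (hx : ‖x‖ < 1) (hxh : ‖x + h‖ < 1) :
    Integrable (fun y => ((u (x + y + h) - u (x + y)) - (u (x + h) - u x)) * kker d σ y) := by
  refine ((H.intDelta hxh).sub (H.intDelta hx)).congr (ae_of_all _ fun y => ?_)
  simp only [Pi.sub_apply, add_right_comm x h y]
  ring

/-- The total nonlocal variation of `u` at `x`. -/
def II (d : ℕ) (σ : ℝ) (u : EE d → ℝ) (x : EE d) : ℝ := ∫ y, |u (x + y) - u x| * kker d σ y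

lemma Hyp.pucci (H : Hyp d σ lam Lam ωa A a f u ωf ωu M) {x h : EE d}
    (hx : ‖x‖ < 1) (hxh : ‖x + h‖ < 1) (hh : h ≠ 0) (e : ℝ) (he : 0 < e) :
    ∃ β, -(ωf ‖h‖ + Lam * ωa ‖h‖ * II d σ u (x + h)) - e ≤
      ∫ y, ((u (x + y + h) - u (x + y)) - (u (x + h) - u x)) * a β x y * kker d σ y := by
  have hxb := mem_ball_zero_iff.2 hx
  have hxhb := mem_ball_zero_iff.2 hxh
  obtain ⟨β, hβ⟩ := (H.hsol x hxb).2 e he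
  have h0 := (H.hsol (x + h) hxhb).1 β
  refine ⟨β, ?_⟩
  have hne : x + h ≠ x := by simpa using hh
  have hnorm : ‖x + h - x‖ = ‖h‖ := by simp
  have hf := (abs_le.1 (H.hfcont β (x + h) hxhb x hxb hne)).2
  rw [hnorm] at hf
  have i1 := H.hint β x hxb
  have i2 := H.hint β (x + h) hxhb
  have iw := H.intMul (H.intW hx hxh) β x
  have habs : Integrable (fun y => |u (x + h + y) - u (x + h)| * kker d σ y) := by
    refine (H.intDelta hxh).norm.congr (ae_of_all _ fun y => ?_)
    simp only [norm_mul, Real.norm_eq_abs, abs_of_nonneg (kker_nonneg d σ y)]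
  have key : ∫ y, (u (x + h + y) - u (x + h)) * a β (x + h) y * kker d σ y ≤
      ∫ y, ((((u (x + y + h) - u (x + y)) - (u (x + h) - u x)) * a β x y * kker d σ y
        + (u (x + y) - u x) * a β x y * kker d σ y)
        + (Lam * ωa ‖h‖) * (|u (x + h + y) - u (x + h)| * kker d σ y)) := by
    refine integral_mono i2 ((iw.add i1).add (habs.const_mul _)) fun y => ?_
    simp only [add_right_comm x h y]
    have hk := kker_nonneg d σ y
    have ha := H.hacont β (x + h) x y hne
    rw [hnorm] at ha
    set D := u (x + y + h) - u (x + h)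
    have h3 : D * (a β (x + h) y - a β x y) ≤ |D| * (Lam * ωa ‖h‖) := by
      calc _ ≤ |D * (a β (x + h) y - a β x y)| := le_abs_self _
        _ = |D| * |a β (x + h) y - a β x y| := abs_mul _ _
        _ ≤ _ := by gcongr
    have h4 := mul_le_mul_of_nonneg_right h3 hk
    have e1 : (u (x + y + h) - u (x + y) - (u (x + h) - u x)) = D - (u (x + y) - u x) := by
      simp only [D]; ring
    rw [e1]
    nlinarith
  have e2 := integral_add (iw.add i1) (habs.const_mul (Lam * ωa ‖h‖))
  simp only [Pi.add_apply] at e2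
  rw [e2, integral_add iw i1, integral_const_mul] at key
  unfold II
  linarith

lemma Hyp.II_le (H : Hyp d σ lam Lam ωa A a f u ωf ωu M) {ρ : ℝ} (hρ : ρ ≤ 1)
    (hs : Summable fun k => ((2:ℝ) ^ σ) ^ k * DD u ρ k) {x : EE d} (hx : ‖x‖ < ρ) :
    II d σ u x ≤ cK d σ * 2 ^ σ * (∑' k, ((2:ℝ) ^ σ) ^ k * DD u ρ k) + 2 * M * cK d σ := by
  have hM0 : 0 ≤ M := (abs_nonneg (u 0)).trans (H.hM 0)
  have hc0 := cK_nonneg d σ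
  have habs : Integrable (fun y => |u (x + y) - u x| * kker d σ y) := by
    refine (H.intDelta (hx.trans_le hρ)).norm.congr (ae_of_all _ fun y => ?_)
    simp only [norm_mul, Real.norm_eq_abs, abs_of_nonneg (kker_nonneg d σ y)]
  let F : ℕ → EE d → ℝ := fun k y => DD u ρ k * (cone d ((1/2:ℝ)^(k+1)) y * kker d σ y)
  have hFi : ∀ k, Integrable (F k) := fun k =>
    (cone_ker_integrable d H.hd σ H.hσ0 H.hσ1 _ (by positivity)).const_mul _
  have hF0 : ∀ k y, 0 ≤ F k y := fun k y => mul_nonneg (DD_nonneg _ _ _)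
    (mul_nonneg (cone_nonneg (by positivity) y) (kker_nonneg d σ y))
  have hFint : ∀ k, ∫ y, F k y = cK d σ * 2 ^ σ * (((2:ℝ) ^ σ) ^ k * DD u ρ k) := by
    intro k
    simp only [F]
    rw [integral_const_mul, cone_ker_integral d σ _ (by positivity)]
    have : ((1/2:ℝ)^(k+1)) ^ (-σ) = ((2:ℝ)^σ)^(k+1) := by
      rw [← Real.rpow_natCast, ← Real.rpow_natCast, ← Real.rpow_mul (by norm_num),
        ← Real.rpow_mul (by norm_num), one_div, Real.inv_rpow (by norm_num),
        ← Real.rpow_neg (by norm_num)]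
      congr 1; ring
    rw [this, pow_succ]; ring
  let T : EE d → ℝ := fun y => 2 * M * (cone d 1 y * kker d σ y)
  have hTi : Integrable T := (cone_ker_integrable_one d H.hd σ H.hσ0 H.hσ1).const_mul _
  have hT0 : ∀ y, 0 ≤ T y := fun y => mul_nonneg (by linarith)
    (mul_nonneg (cone_nonneg one_pos y) (kker_nonneg d σ y))
  have hTint : ∫ y, T y = 2 * M * cK d σ := by
    simp only [T]; rw [integral_const_mul]; rfl
  have hpt : ∀ᵐ y : EE d, ENNReal.ofReal (|u (x + y) - u x| * kker d σ y) ≤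
      (∑' k, ENNReal.ofReal (F k y)) + ENNReal.ofReal (T y) := by
    have hnull : ∀ᵐ y : EE d, y ≠ 0 := by
      have : Nonempty (Fin d) := ⟨⟨0, H.hd⟩⟩
      rw [ae_iff]; simp
    filter_upwards [hnull] with y hy
    have hy0 : 0 < ‖y‖ := norm_pos_iff.2 hy
    by_cases hy1 : ‖y‖ ≤ 1
    · obtain ⟨k, hk1, hk2⟩ := exists_nat_pow_near_of_lt_one hy0 hy1
        (by norm_num : (0:ℝ) < 1/2) (by norm_num)
      have hcone : cone d ((1/2:ℝ)^(k+1)) y = 1 := by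
        unfold cone
        apply min_eq_right
        rw [one_le_div (by positivity)]; exact hk1.le
      calc ENNReal.ofReal (|u (x + y) - u x| * kker d σ y) ≤ ENNReal.ofReal (F k y) := by
            apply ENNReal.ofReal_le_ofReal
            simp only [F]
            rw [hcone, one_mul]
            exact mul_le_mul_of_nonneg_right (le_DD H.hM hx hk2) (kker_nonneg d σ y)
        _ ≤ ∑' k, ENNReal.ofReal (F k y) := ENNReal.le_tsum k
        _ ≤ _ := le_self_add
    · have hcone : cone d 1 y = 1 := by
        unfold cone
        apply min_eq_right
        rw [div_one]; linarith
      refine le_trans ?_ le_add_self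
      apply ENNReal.ofReal_le_ofReal
      simp only [T]
      rw [hcone, one_mul]
      refine mul_le_mul_of_nonneg_right ?_ (kker_nonneg d σ y)
      have := abs_sub (u (x + y)) (u x)
      linarith [H.hM x, H.hM (x + y)]
  have hlin := lintegral_mono_ae hpt
  rw [lintegral_add_right' _ hTi.aestronglyMeasurable.aemeasurable.ennreal_ofReal,
    lintegral_tsum (fun k => (hFi k).aestronglyMeasurable.aemeasurable.ennreal_ofReal),
    ← ofReal_integral_eq_lintegral_ofReal hTi (ae_of_all _ hT0),
    ← ofReal_integral_eq_lintegral_ofReal habs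
      (ae_of_all _ fun y => mul_nonneg (abs_nonneg _) (kker_nonneg d σ y))] at hlin
  have e1 : ∀ k, ∫⁻ y, ENNReal.ofReal (F k y)
      = ENNReal.ofReal (cK d σ * 2 ^ σ * (((2:ℝ) ^ σ) ^ k * DD u ρ k)) := by
    intro k
    rw [← ofReal_integral_eq_lintegral_ofReal (hFi k) (ae_of_all _ (hF0 k)), hFint]
  simp_rw [e1] at hlin
  have hDD := DD_nonneg u ρ
  have hS0 : 0 ≤ ∑' k, ((2:ℝ) ^ σ) ^ k * DD u ρ k :=
    tsum_nonneg fun k => mul_nonneg (by positivity) (hDD k)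
  rw [← ENNReal.ofReal_tsum_of_nonneg
    (fun k => mul_nonneg (by positivity) (mul_nonneg (by positivity) (hDD k)))
    (hs.mul_left _), tsum_mul_left, hTint,
    ← ENNReal.ofReal_add (by positivity) (by positivity)] at hlin
  exact (ENNReal.ofReal_le_ofReal_iff (by positivity)).1 hlin

/-- The averaging property with constant `c`. -/
def AvgProp (d : ℕ) (σ c : ℝ) : Prop :=
  ∀ (G : EE d → ℝ) (Q r : ℝ) (h : EE d), (∀ y, 0 ≤ G y) →
      Integrable (fun y => G y * kker d σ y) → ∫ y, G y * kker d σ y ≤ Q → 0 < r → ‖h‖ ≤ r →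
      ∃ y, ‖y‖ < r ∧ G y + G (y + h) ≤ c * (r ^ σ * Q)

lemma cone_sub_le {R : ℝ} (hR : 0 < R) (x y : EE d) :
    cone d R (x + y) - cone d R x ≤ cone d R y := by
  unfold cone
  have h1 : ‖x + y‖ / R ≤ ‖x‖ / R + ‖y‖ / R := by
    rw [← add_div]; gcongr; exact norm_add_le _ _
  have h2 : 0 ≤ ‖x‖ / R := by positivity
  have h3 : 0 ≤ ‖y‖ / R := by positivity
  rcases min_cases (‖x + y‖ / R) 1 with h | h <;> rcases min_cases (‖x‖ / R) 1 with h' | h' <;>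
  rcases min_cases (‖y‖ / R) 1 with h'' | h'' <;> linarith

lemma Hyp.step_pt (H : Hyp d σ lam Lam ωa A a f u ωf ωu M) {c : ℝ}
    (hc : AvgProp d σ c)
    {ρ R g r Ib : ℝ} {k : ℕ} (hr : r = (1/2:ℝ) ^ (k+1)) (hρ : ρ ≤ 3/4) (hg : 0 < g)
    (hRr : 2 * r ≤ R)
    (hIb : ∀ x : EE d, ‖x‖ < ρ → II d σ u x ≤ Ib) {x0 h : EE d}
    (hx1 : ‖x0‖ + 2 * R < ρ) (hx2 : ‖x0‖ + R + g / 2 ≤ ρ) (hh0 : h ≠ 0) (hh : ‖h‖ ≤ r) :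
    u (x0 + h) - u x0 ≤ 1 / 2 * DD u ρ k + 1 / 2 * (c * (r ^ σ * (lam⁻¹ *
      (Lam * (cK d σ * (2 * DD u ρ (k+1) * R ^ (-σ) + 2 * ωu r * (g / 2) ^ (-σ)))
        + ωf r + Lam * ωa r * Ib)))) := by
  have hr0 : 0 < r := by rw [hr]; positivity
  have hR : 0 < R := by linarith
  have hLam : 0 < Lam := H.hlam.trans_le H.hlL
  have hnh : 0 < ‖h‖ := norm_pos_iff.2 hh0
  have hωu0 : 0 ≤ ωu r := H.hωu.1 r hr0
  set D := DD u ρ (k+1) with hD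
  have hD0 : 0 ≤ D := DD_nonneg _ _ _
  set w : EE d → ℝ := fun z => u (z + h) - u z with hw
  have hwD : ∀ z : EE d, ‖z‖ < ρ → |w z| ≤ D := fun z hz => le_DD H.hM hz (hr ▸ hh)
  have hwu : ∀ z : EE d, |w z| ≤ ωu r := by
    intro z
    have h1 := H.hucont (z + h) z (by simpa using hh0)
    rw [add_sub_cancel_left] at h1
    exact h1.trans (H.hωu.2.1 hnh hr0 hh)
  -- the penalized function attains its maximum
  set ψ : EE d → ℝ := fun z => w z - 2 * D * cone d R (z - x0) with hψ
  have hucont : ContinuousOn u (ball 0 1) := by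
    obtain ⟨C, ε, hC, hε, hHol⟩ := H.hHol
    have hs : 0 < σ + ε := add_pos H.hσ0 hε
    intro x hx
    rw [ContinuousWithinAt, tendsto_iff_dist_tendsto_zero]
    have hlim : Tendsto (fun z : EE d => C * ‖z - x‖ ^ (σ + ε)) (𝓝[ball 0 1] x) (𝓝 0) := by
      have hcont : Continuous (fun z : EE d => C * ‖z - x‖ ^ (σ + ε)) := by
        refine continuous_const.mul ?_
        exact (continuous_norm.comp (continuous_id.sub continuous_const)).rpow_const
          (fun _ => Or.inr hs.le)
      have := (hcont.tendsto x).mono_left (nhdsWithin_le_nhds (s := ball 0 1))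
      simpa [Real.zero_rpow hs.ne'] using this
    refine squeeze_zero' (Eventually.of_forall fun _ => dist_nonneg) ?_ hlim
    filter_upwards [self_mem_nhdsWithin] with z hz
    rw [Real.dist_eq]; exact hHol z hz x hx
  have hwc : ContinuousOn w (closedBall x0 R) := by
    have hnorm : ∀ z ∈ closedBall x0 R, ‖z‖ ≤ ‖x0‖ + R := by
      intro z hz
      have h1 : ‖z - x0‖ ≤ R := by simpa [dist_eq_norm] using hz
      have h2 := norm_add_le (z - x0) x0
      rw [sub_add_cancel] at h2; linarith
    refine ContinuousOn.sub (hucont.comp (by fun_prop) ?_) (hucont.mono ?_)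
    · intro z hz
      rw [mem_ball_zero_iff]
      linarith [norm_add_le z h, hnorm z hz]
    · intro z hz
      rw [mem_ball_zero_iff]; linarith [hnorm z hz]
  have hψc : ContinuousOn ψ (closedBall x0 R) := by
    refine hwc.sub (Continuous.continuousOn ?_)
    unfold cone; fun_prop
  obtain ⟨x1, hx1m, hmax⟩ := (isCompact_closedBall x0 R).exists_isMaxOn
    ⟨x0, mem_closedBall_self hR.le⟩ hψc
  have hx1n : ‖x1‖ ≤ ‖x0‖ + R := by
    have h1 : ‖x1 - x0‖ ≤ R := by simpa [dist_eq_norm] using hx1m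
    have h2 := norm_add_le (x1 - x0) x0
    rw [sub_add_cancel] at h2; linarith
  have hψ0 : ψ x0 = w x0 := by simp [hψ, cone]
  have hψ01 : ψ x0 ≤ ψ x1 := hmax (mem_closedBall_self hR.le)
  have hψle : ∀ z : EE d, ‖z‖ < ρ → ψ z ≤ ψ x1 := by
    intro z hz
    by_cases hzb : z ∈ closedBall x0 R
    · exact hmax hzb
    · refine le_trans ?_ hψ01
      have h1 : R < ‖z - x0‖ := by simpa [dist_eq_norm] using hzb
      have h2 : cone d R (z - x0) = 1 := by
        unfold cone; apply min_eq_right; rw [one_le_div hR]; exact h1.le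
      rw [hψ0]
      simp only [hψ, h2]
      have h3 := (abs_le.1 (hwD z hz)).2
      have h4 := (abs_le.1 (hwD x0 (by linarith))).1
      linarith
  have hw01 : w x0 ≤ w x1 := by
    have h1 : ψ x1 ≤ w x1 := by
      have := mul_nonneg (mul_nonneg zero_le_two hD0) (cone_nonneg hR (x1 - x0))
      simp only [hψ]; linarith
    linarith
  -- the upper barrier
  set E : EE d → ℝ := fun y => 2 * D * cone d R y + 2 * ωu r * cone d (g / 2) y with hE
  have hg2 : 0 < g / 2 := by linarith
  have hE0 : ∀ y, 0 ≤ E y := fun y => by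
    have h1 := cone_nonneg hR y
    have h2 := cone_nonneg hg2 y
    simp only [hE]; positivity
  have hwE : ∀ y, w (x1 + y) - w x1 ≤ E y := by
    intro y
    have h1 := mul_nonneg (mul_nonneg zero_le_two hD0) (cone_nonneg hR y)
    have h2 := mul_nonneg (mul_nonneg zero_le_two hωu0) (cone_nonneg hg2 y)
    by_cases hy : ‖x1 + y‖ < ρ
    · have h3 := hψle _ hy
      have h4 := cone_sub_le hR (x1 - x0) y
      have h5 : x1 - x0 + y = x1 + y - x0 := by abel
      rw [h5] at h4
      have h6 := mul_le_mul_of_nonneg_left h4 (mul_nonneg zero_le_two hD0)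
      simp only [hψ] at h3
      simp only [hE]; linarith
    · have h3 : g / 2 ≤ ‖y‖ := by
        have := norm_add_le x1 y
        linarith
      have h4 : cone d (g / 2) y = 1 := by
        unfold cone; apply min_eq_right; rwa [one_le_div hg2]
      have h5 := (abs_le.1 (hwu (x1 + y))).2
      have h6 := (abs_le.1 (hwu x1)).1
      simp only [hE, h4]; linarith
  set G : EE d → ℝ := fun y => E y - (w (x1 + y) - w x1) with hG
  have hG0 : ∀ y, 0 ≤ G y := fun y => sub_nonneg.2 (hwE y)
  have hx1lt : ‖x1‖ < 1 := by linarith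
  have hx1h : ‖x1 + h‖ < ρ := by linarith [norm_add_le x1 h]
  have hEi : Integrable (fun y => E y * kker d σ y) := by
    have h1 := (cone_ker_integrable d H.hd σ H.hσ0 H.hσ1 R hR).const_mul (2 * D)
    have h2 := (cone_ker_integrable d H.hd σ H.hσ0 H.hσ1 (g/2) hg2).const_mul (2 * ωu r)
    refine (h1.add h2).congr (ae_of_all _ fun y => ?_)
    simp only [hE, Pi.add_apply]; ring
  have hEint : ∫ y, E y * kker d σ y
      = cK d σ * (2 * D * R ^ (-σ) + 2 * ωu r * (g / 2) ^ (-σ)) := by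
    have h1 := (cone_ker_integrable d H.hd σ H.hσ0 H.hσ1 R hR).const_mul (2 * D)
    have h2 := (cone_ker_integrable d H.hd σ H.hσ0 H.hσ1 (g/2) hg2).const_mul (2 * ωu r)
    have h3 := integral_add h1 h2
    rw [integral_const_mul, integral_const_mul, cone_ker_integral d σ R hR,
      cone_ker_integral d σ (g/2) hg2] at h3
    have h4 : ∀ y, E y * kker d σ y = 2 * D * (cone d R y * kker d σ y)
        + 2 * ωu r * (cone d (g/2) y * kker d σ y) := fun y => by
      simp only [hE]; ring
    simp_rw [h4]
    rw [h3]; ring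
  have hWi : Integrable (fun y => (w (x1 + y) - w x1) * kker d σ y) :=
    H.intW hx1lt (by linarith)
  have hGi : Integrable (fun y => G y * kker d σ y) := by
    refine (hEi.sub hWi).congr (ae_of_all _ fun y => ?_)
    simp only [hG, Pi.sub_apply]; ring
  set Q' := Lam * (cK d σ * (2 * D * R ^ (-σ) + 2 * ωu r * (g / 2) ^ (-σ)))
        + ωf r + Lam * ωa r * Ib with hQ'
  have hGint : ∫ y, G y * kker d σ y ≤ lam⁻¹ * Q' := by
    rw [inv_mul_eq_div, le_div_iff₀ H.hlam, mul_comm]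
    refine le_of_forall_pos_le_add fun e he => ?_
    obtain ⟨β, hβ⟩ := H.pucci hx1lt (by linarith : ‖x1 + h‖ < 1) hh0 e he
    have hWai : Integrable (fun y => (w (x1 + y) - w x1) * a β x1 y * kker d σ y) :=
      H.intMul hWi β x1
    have hβ' : -(ωf ‖h‖ + Lam * ωa ‖h‖ * II d σ u (x1 + h)) - e ≤
        ∫ y, (w (x1 + y) - w x1) * a β x1 y * kker d σ y := hβ
    have hcomp : lam * ∫ y, G y * kker d σ y ≤
        ∫ y, (Lam * (E y * kker d σ y) - (w (x1 + y) - w x1) * a β x1 y * kker d σ y) := by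
      rw [← integral_const_mul]
      refine integral_mono (hGi.const_mul _) ((hEi.const_mul _).sub hWai) fun y => ?_
      have ha := H.hIcc β x1 y
      have hk := kker_nonneg d σ y
      have h1 : lam * G y ≤ a β x1 y * G y := mul_le_mul_of_nonneg_right ha.1 (hG0 y)
      have h2 : a β x1 y * E y ≤ Lam * E y := mul_le_mul_of_nonneg_right ha.2 (hE0 y)
      have h3 : lam * G y ≤ Lam * E y - (w (x1 + y) - w x1) * a β x1 y := by
        have : a β x1 y * G y = a β x1 y * E y - (w (x1 + y) - w x1) * a β x1 y := by
          simp only [hG]; ring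
        linarith
      have h4 := mul_le_mul_of_nonneg_right h3 hk
      simp only
      nlinarith
    rw [integral_sub (hEi.const_mul _) hWai, integral_const_mul, hEint] at hcomp
    have hf1 : ωf ‖h‖ ≤ ωf r := H.hωf.2.1 hnh hr0 hh
    have ha1 : ωa ‖h‖ ≤ ωa r := H.hωa.2.1 hnh hr0 hh
    have ha0 : 0 ≤ ωa r := H.hωa.1 r hr0
    have hI0 : 0 ≤ II d σ u (x1 + h) :=
      integral_nonneg fun y => mul_nonneg (abs_nonneg _) (kker_nonneg d σ y)
    have hI1 := hIb (x1 + h) hx1h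
    have : Lam * ωa ‖h‖ * II d σ u (x1 + h) ≤ Lam * ωa r * Ib := by gcongr
    linarith
  obtain ⟨y, hy, hyG⟩ := hc G (lam⁻¹ * Q') r h hG0 hGi hGint hr0 hh
  have h1 : w (x1 + y) + w (x1 + (y + h)) = u (x1 + y + (h + h)) - u (x1 + y) := by
    simp only [hw, add_assoc]; ring
  have h2 : u (x1 + y + (h + h)) - u (x1 + y) ≤ DD u ρ k := by
    refine (le_abs_self _).trans (le_DD H.hM ?_ ?_)
    · linarith [norm_add_le x1 y]
    · have : (1/2:ℝ)^k = r + r := by rw [hr, pow_succ]; ring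
      rw [this]; linarith [norm_add_le h h]
  have h3 : 2 * w x1 ≤ w (x1 + y) + w (x1 + (y + h)) + (G y + G (y + h)) := by
    have := hE0 y
    have := hE0 (y + h)
    simp only [hG]; linarith
  have : w x0 = u (x0 + h) - u x0 := rfl
  linarith

/-- The dyadic sum controlling the `C^σ` seminorm. -/
def SS {d : ℕ} (σ : ℝ) (u : EE d → ℝ) (ρ : ℝ) : ℝ := ∑' k, ((2:ℝ) ^ σ) ^ k * DD u ρ k

lemma half_pow_rpow (σ : ℝ) (k : ℕ) : ((1/2:ℝ)^k) ^ (-σ) = ((2:ℝ)^σ)^k := by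
  rw [← Real.rpow_natCast, ← Real.rpow_natCast, ← Real.rpow_mul (by norm_num),
    ← Real.rpow_mul (by norm_num), one_div, Real.inv_rpow (by norm_num),
    ← Real.rpow_neg (by norm_num)]
  congr 1; ring

lemma step_aux {L c X U b g F a I P : ℝ} (hL : 0 ≤ L) (hc : 0 ≤ c) (hX : 0 ≤ X) (hU : 0 ≤ U)
    (hb : b ≤ 2) (hg : 0 ≤ g) (hF : 0 ≤ F) (ha : 0 ≤ a) (hP : 0 ≤ P) (hI : I ≤ 2 * c * P) :
    L * (c * (2 * X + 2 * U * (b * g))) + F + L * a * I ≤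
      (1 + 4 * (L * c)) * (X + g * U + F + a * P) := by
  have t1 : L * (c * (2 * U * (b * g))) ≤ L * (c * (2 * U * (2 * g))) := by gcongr
  have t2 : L * a * I ≤ L * a * (2 * c * P) := by gcongr
  have p1 : 0 ≤ L * c * X := by positivity
  have p2 : 0 ≤ L * c * F := by positivity
  have p3 : 0 ≤ L * c * (a * P) := by positivity
  have p4 : 0 ≤ g * U := by positivity
  have p5 : 0 ≤ a * P := by positivity
  linarith

set_option maxHeartbeats 1000000 in
lemma Hyp.step (H : Hyp d σ lam Lam ωa A a f u ωf ωu M) {c : ℝ} (hc0 : 0 < c)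
    (hc : AvgProp d σ c) {ρ ρ' : ℝ} {k m : ℕ} (hm : 1 ≤ m) (hρ' : ρ' ≤ 3/4)
    (hs : Summable fun k => ((2:ℝ) ^ σ) ^ k * DD u ρ' k)
    (hgap : 4 * (2 ^ m * (1/2:ℝ)^(k+1)) ≤ ρ' - ρ) :
    ((2:ℝ)^σ)^(k+1) * DD u ρ (k+1) ≤ 2 ^ σ / 2 * (((2:ℝ)^σ)^k * DD u ρ' k)
      + (c * lam⁻¹ * (1 + 4 * (Lam * cK d σ))) *
        ((((2:ℝ)^σ)^m)⁻¹ * (((2:ℝ)^σ)^(k+1) * DD u ρ' (k+1))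
          + (ρ' - ρ) ^ (-σ) * ωu ((1/2:ℝ)^(k+1)) + ωf ((1/2:ℝ)^(k+1))
          + ωa ((1/2:ℝ)^(k+1)) * (SS σ u ρ' + M)) := by
  have hM0 : 0 ≤ M := (abs_nonneg (u 0)).trans (H.hM 0)
  have hLam : 0 < Lam := H.hlam.trans_le H.hlL
  have hlam := H.hlam
  have hcK := cK_nonneg d σ
  set r : ℝ := (1/2:ℝ)^(k+1) with hr
  have hr0 : 0 < r := by positivity
  set R : ℝ := 2 ^ m * r with hR
  set g : ℝ := ρ' - ρ with hg
  have hRr : 2 * r ≤ R := by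
    rw [hR]
    have : (2:ℝ)^1 ≤ 2^m := pow_le_pow_right₀ (by norm_num) hm
    nlinarith
  have hR0 : 0 < R := by linarith
  have hg0 : 0 < g := by linarith
  have hu0 := H.hωu.1 r hr0
  have hf0 := H.hωf.1 r hr0
  have ha0 := H.hωa.1 r hr0
  have hS0 : 0 ≤ SS σ u ρ' := tsum_nonneg fun k => mul_nonneg (by positivity) (DD_nonneg _ _ k)
  have hD0 := DD_nonneg u ρ' k
  have hD1 := DD_nonneg u ρ' (k+1)
  set b : ℝ := 2 ^ σ with hb
  have hb0 : 0 < b := by positivity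
  have hb2 : b ≤ 2 := by
    rw [hb]; calc (2:ℝ)^σ ≤ 2^(1:ℝ) := Real.rpow_le_rpow_of_exponent_le (by norm_num) H.hσ1.le
      _ = 2 := Real.rpow_one 2
  set Ib : ℝ := cK d σ * b * SS σ u ρ' + 2 * M * cK d σ with hIb
  have hIb0 : 0 ≤ Ib := by positivity
  have hIble : Ib ≤ 2 * cK d σ * (SS σ u ρ' + M) := by
    rw [hIb]
    have : cK d σ * b * SS σ u ρ' ≤ cK d σ * 2 * SS σ u ρ' := by gcongr
    linarith
  set rhs : ℝ := 1 / 2 * DD u ρ' k + 1 / 2 * (c * (r ^ σ * (lam⁻¹ *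
      (Lam * (cK d σ * (2 * DD u ρ' (k+1) * R ^ (-σ) + 2 * ωu r * (g / 2) ^ (-σ)))
        + ωf r + Lam * ωa r * Ib)))) with hrhs
  have hrhs0 : 0 ≤ rhs := by positivity
  have hpt : ∀ x0 h : EE d, ‖x0‖ < ρ + r → ‖h‖ ≤ r → u (x0 + h) - u x0 ≤ rhs := by
    intro x0 h hx hh
    by_cases hh0 : h = 0
    · simpa [hh0] using hrhs0
    · exact H.step_pt hc hr hρ' hg0 hRr
        (fun x hx => H.II_le (by linarith) hs hx)
        (by linarith) (by linarith) hh0 hh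
  have hDle : DD u ρ (k+1) ≤ rhs := by
    apply DD_le _ _ _ _ hrhs0
    intro x h hx hh
    rw [abs_le]
    constructor
    · have := hpt (x + h) (-h) (by linarith [norm_add_le x h]) (by rwa [norm_neg])
      rw [add_neg_cancel_right] at this
      linarith
    · exact hpt x h (by linarith) hh
  have e1 : b^(k+1) * r^σ = 1 := by
    rw [hb, ← half_pow_rpow, ← hr, ← Real.rpow_add hr0]; simp
  have e2 : R ^ (-σ) = (b^m)⁻¹ * b^(k+1) := by
    rw [hR, Real.mul_rpow (by positivity) hr0.le, hr, half_pow_rpow, ← hb]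
    congr 1
    rw [hb, Real.rpow_neg (by positivity), ← Real.rpow_natCast, ← Real.rpow_natCast,
      ← Real.rpow_mul (by norm_num), ← Real.rpow_mul (by norm_num), mul_comm]
  have e3 : (g/2)^(-σ) = b * g^(-σ) := by
    rw [Real.div_rpow hg0.le (by norm_num), Real.rpow_neg (by norm_num : (0:ℝ) ≤ 2), ← hb]
    field_simp
  have hgs : 0 < g ^ (-σ) := by positivity
  have hbm : 0 < (b^m)⁻¹ := by positivity
  set X := (b^m)⁻¹ * (b^(k+1) * DD u ρ' (k+1)) with hX
  have hX0 : 0 ≤ X := by positivity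
  have step1 : b^(k+1) * DD u ρ (k+1) ≤ b^(k+1) * rhs := by gcongr
  have step2 : b^(k+1) * rhs = b / 2 * (b^k * DD u ρ' k) + 1/2 * c * lam⁻¹ *
      (Lam * (cK d σ * (2 * X + 2 * ωu r * (b * g^(-σ)))) + ωf r + Lam * ωa r * Ib) := by
    rw [hrhs, e2, e3, mul_add]
    congr 1
    · rw [pow_succ]; ring
    · rw [hX]
      linear_combination (1/2 * c * lam⁻¹ * (Lam * (cK d σ * (2 * DD u ρ' (k+1) *
        ((b^m)⁻¹ * b^(k+1)) + 2 * ωu r * (b * g ^ (-σ)))) + ωf r + Lam * ωa r * Ib)) * e1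
  have step3 : Lam * (cK d σ * (2 * X + 2 * ωu r * (b * g^(-σ)))) + ωf r + Lam * ωa r * Ib ≤
      (1 + 4 * (Lam * cK d σ)) * (X + g^(-σ) * ωu r + ωf r + ωa r * (SS σ u ρ' + M)) := by
    exact step_aux hLam.le hcK hX0 hu0 hb2 hgs.le hf0 ha0 (by positivity) hIble
  have hpos : 0 ≤ (1 + 4 * (Lam * cK d σ)) * (X + g^(-σ) * ωu r + ωf r + ωa r * (SS σ u ρ' + M)) := by
    positivity
  have step4 : 1/2 * c * lam⁻¹ *
      (Lam * (cK d σ * (2 * X + 2 * ωu r * (b * g^(-σ)))) + ωf r + Lam * ωa r * Ib) ≤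
      c * lam⁻¹ * ((1 + 4 * (Lam * cK d σ)) *
        (X + g^(-σ) * ωu r + ωf r + ωa r * (SS σ u ρ' + M))) := by
    apply mul_le_mul _ step3 (by positivity) (by positivity)
    have : 0 < c * lam⁻¹ := by positivity
    linarith
  calc _ ≤ _ := step1
    _ = _ := step2
    _ ≤ _ := by rw [mul_assoc (c * lam⁻¹)]; linarith

lemma Hyp.DD_mono (H : Hyp d σ lam Lam ωa A a f u ωf ωu M) {ρ ρ' : ℝ} (h : ρ ≤ ρ') (k : ℕ) :
    DD u ρ k ≤ DD u ρ' k :=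
  DD_le _ _ _ _ (DD_nonneg _ _ _) fun _ _ hx hh => le_DD H.hM (hx.trans_le h) hh

lemma Hyp.summ (H : Hyp d σ lam Lam ωa A a f u ωf ωu M) {ρ : ℝ} (hρ : ρ ≤ 3/4) :
    Summable fun k => ((2:ℝ) ^ σ) ^ k * DD u ρ k := by
  obtain ⟨C, ε, hC, hε, hHol⟩ := H.hHol
  rw [← summable_nat_add_iff 3]
  have hq0 : (0:ℝ) < (1/2) ^ ε := by positivity
  have hq1 : ((1/2:ℝ)) ^ ε < 1 := Real.rpow_lt_one (by norm_num) (by norm_num) hε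
  have hgeo : Summable fun k : ℕ => C * ((1/2:ℝ) ^ ε) ^ (k+3) :=
    ((summable_nat_add_iff 3).2 (summable_geometric_of_lt_one hq0.le hq1)).mul_left C
  refine Summable.of_nonneg_of_le (fun k => mul_nonneg (by positivity) (DD_nonneg _ _ _))
    (fun k => ?_) hgeo
  have hk : DD u ρ (k+3) ≤ C * ((1/2:ℝ)^(k+3)) ^ (σ + ε) := by
    apply DD_le _ _ _ _ (by positivity)
    intro x h hx hh
    have hle : (1/2:ℝ)^(k+3) ≤ (1/2)^3 := pow_le_pow_of_le_one (by norm_num) (by norm_num) (by omega)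
    have h8 : (1/2:ℝ)^3 < 1/4 := by norm_num
    have h1 := hHol (x + h) (by rw [mem_ball_zero_iff]; linarith [norm_add_le x h])
      x (by rw [mem_ball_zero_iff]; linarith)
    rw [add_sub_cancel_left] at h1
    refine h1.trans ?_
    have := H.hσ0
    gcongr
  have e : ((1/2:ℝ)^(k+3)) ^ (σ + ε) = (((2:ℝ)^σ)^(k+3))⁻¹ * ((1/2:ℝ)^ε)^(k+3) := by
    rw [Real.rpow_add (by positivity), ← half_pow_rpow, Real.rpow_neg (by positivity), inv_inv]
    congr 1
    rw [← Real.rpow_natCast, ← Real.rpow_natCast, ← Real.rpow_mul (by norm_num),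
      ← Real.rpow_mul (by norm_num), mul_comm]
  have hb : 0 < ((2:ℝ)^σ)^(k+3) := by positivity
  calc ((2:ℝ)^σ)^(k+3) * DD u ρ (k+3) ≤ ((2:ℝ)^σ)^(k+3) * (C * ((1/2:ℝ)^(k+3)) ^ (σ + ε)) := by
        gcongr
    _ = _ := by rw [e]; field_simp

lemma Hyp.SS_mono (H : Hyp d σ lam Lam ωa A a f u ωf ωu M) {ρ ρ' : ℝ} (h : ρ ≤ ρ')
    (hρ : ρ' ≤ 3/4) : SS σ u ρ ≤ SS σ u ρ' :=
  (H.summ (h.trans hρ)).tsum_le_tsum (fun k => by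
    have := H.DD_mono h k
    gcongr) (H.summ hρ)

lemma IsDini.summable {ω : ℝ → ℝ} (h : IsDini ω) :
    Summable fun k : ℕ => ω ((1/2:ℝ)^(k+1)) := by
  obtain ⟨h0, hmono, hint⟩ := h
  set s : ℕ → Set ℝ := fun k => Set.Ioc ((1/2:ℝ)^(k+1)) ((1/2:ℝ)^k) with hs
  have hanti : Antitone fun k : ℕ => (1/2:ℝ)^k :=
    pow_right_anti₀ (by norm_num) (by norm_num)
  have hdis : Pairwise (Function.onFun Disjoint s) := hanti.pairwise_disjoint_on_Ioc_succ
  have hsub : ∀ k, s k ⊆ Set.Ioc 0 1 := fun k t ht =>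
    ⟨lt_trans (by positivity) ht.1, ht.2.trans (pow_le_one₀ (by norm_num) (by norm_num))⟩
  have hsum := (hasSum_integral_iUnion (f := fun r => ω r / r) (μ := volume)
    (fun k => measurableSet_Ioc) hdis (hint.mono_set (Set.iUnion_subset hsub))).summable
  refine Summable.of_nonneg_of_le (fun k => h0 _ (by positivity)) (fun k => ?_) (hsum.mul_left 2)
  have hp : (0:ℝ) < (1/2)^(k+1) := by positivity
  have hle : ∫ _ in s k, ω ((1/2:ℝ)^(k+1)) / (1/2:ℝ)^k ≤ ∫ r in s k, ω r / r := by
    refine setIntegral_mono_on (integrableOn_const (by simp [hs])) (hint.mono_set (hsub k))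
      measurableSet_Ioc fun t ht => ?_
    have ht0 : 0 < t := hp.trans ht.1
    have h1 : ω ((1/2:ℝ)^(k+1)) ≤ ω t := hmono hp ht0 ht.1.le
    exact div_le_div₀ (h0 t ht0) h1 ht0 ht.2
  rw [setIntegral_const, smul_eq_mul] at hle
  have hvol : volume.real (s k) = (1/2:ℝ)^(k+1) := by
    simp only [hs]
    rw [Real.volume_real_Ioc_of_le (hanti (show k ≤ k + 1 by omega)), pow_succ]
    ring
  rw [hvol] at hle
  have e : (1/2:ℝ)^(k+1) * (ω ((1/2:ℝ)^(k+1)) / (1/2:ℝ)^k) = 1/2 * ω ((1/2:ℝ)^(k+1)) := by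
    have : (1/2:ℝ)^k ≠ 0 := by positivity
    rw [mul_div_assoc', div_eq_iff this, pow_succ]; ring
  linarith

lemma contract (V : ℝ → ℝ) (I : Set ℝ) (t Bd K : ℝ) (ht0 : 0 ≤ t) (ht1 : t < 1) (hK : 0 ≤ K)
    (hB : ∀ ρ ∈ I, V ρ ≤ Bd)
    (hstep : ∀ ρ ∈ I, ∃ ρ' ∈ I, V ρ ≤ t * V ρ' + K) :
    ∀ ρ ∈ I, V ρ ≤ K / (1 - t) := by
  have h1 : 0 < 1 - t := by linarith
  have key : ∀ n : ℕ, ∀ ρ ∈ I, V ρ ≤ t^n * Bd + K / (1 - t) := by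
    intro n
    induction n with
    | zero =>
      intro ρ hρ
      have : 0 ≤ K / (1 - t) := by positivity
      linarith [hB ρ hρ]
    | succ n ih =>
      intro ρ hρ
      obtain ⟨ρ', hρ', hle⟩ := hstep ρ hρ
      have h2 := mul_le_mul_of_nonneg_left (ih ρ' hρ') ht0
      have h3 : t * (K / (1 - t)) + K = K / (1 - t) := by field_simp; ring
      rw [pow_succ]; linarith
  intro ρ hρ
  have hlim : Tendsto (fun n : ℕ => t^n * Bd + K / (1 - t)) atTop (𝓝 (0 * Bd + K / (1 - t))) :=
    ((tendsto_pow_atTop_nhds_zero_of_lt_one ht0 ht1).mul_const _).add_const _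
  rw [zero_mul, zero_add] at hlim
  exact ge_of_tendsto' hlim fun n => key n ρ hρ
end

set_option maxHeartbeats 2000000 in
theorem apriori (d : ℕ) (hd : 1 ≤ d) (σ lam Lam : ℝ) (hσ0 : 0 < σ) (hσ1 : σ < 1)
    (hlam : 0 < lam) (hlL : lam ≤ Lam) (ωa : ℝ → ℝ) (hωa : IsDini ωa) :
    ∃ C : ℝ, 0 < C ∧ ∀ (A : Type) (a : A → EE d → EE d → ℝ) (f : A → EE d → ℝ)
      (u : EE d → ℝ) (ωf ωu : ℝ → ℝ) (M : ℝ), Hyp d σ lam Lam ωa A a f u ωf ωu M →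
      SS σ u (1/2) ≤ C * (M + (∑' k : ℕ, ωu ((1/2:ℝ)^(k+1))) + ∑' k : ℕ, ωf ((1/2:ℝ)^(k+1))) := by
  obtain ⟨c, hc0, hc⟩ := averaging d hd σ hσ0
  have hcK := cK_nonneg d σ
  have hLam : 0 < Lam := hlam.trans_le hlL
  set c3 : ℝ := c * lam⁻¹ * (1 + 4 * (Lam * cK d σ)) with hc3
  have hc30 : 0 < c3 := by positivity
  set b : ℝ := 2 ^ σ with hb
  have hb1 : 1 < b := Real.one_lt_rpow (by norm_num) hσ0
  have hb0 : 0 < b := by linarith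
  have hb2 : b < 2 := by
    rw [hb]; calc (2:ℝ)^σ < 2^(1:ℝ) := Real.rpow_lt_rpow_of_exponent_lt (by norm_num) hσ1
      _ = 2 := Real.rpow_one 2
  set q0 : ℝ := b / 2 with hq0
  set q : ℝ := (1 + q0) / 2 with hq
  have hq0lt : q0 < 1 := by rw [hq0]; linarith
  have hq00 : 0 < q0 := by positivity
  have hqlt : q < 1 := by rw [hq]; linarith
  have hq0q : q0 < q := by rw [hq]; linarith
  have hqpos : 0 < q := by linarith
  set t : ℝ := Real.sqrt q with ht
  have ht0 : 0 < t := Real.sqrt_pos.2 hqpos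
  have htt : t * t = q := Real.mul_self_sqrt hqpos.le
  have ht1 : t < 1 := by nlinarith
  have hts : t ≤ t ^ σ := by
    calc t = t ^ (1:ℝ) := (Real.rpow_one t).symm
      _ ≤ t ^ σ := Real.rpow_le_rpow_of_exponent_ge ht0 ht1.le hσ1.le
  set δ : ℝ := (q - q0) / (2 * c3) with hδ
  have hδ0 : 0 < δ := div_pos (by linarith) (by positivity)
  have hδe : c3 * δ = (q - q0) / 2 := by rw [hδ]; field_simp
  -- choice of `m`
  obtain ⟨m, hm1, hm⟩ : ∃ m : ℕ, 1 ≤ m ∧ c3 * (b^m)⁻¹ ≤ (q - q0) / 2 := by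
    obtain ⟨m, hm⟩ := exists_pow_lt_of_lt_one hδ0 (inv_lt_one_of_one_lt₀ hb1)
    refine ⟨m + 1, by omega, ?_⟩
    rw [← hδe, ← inv_pow]
    apply mul_le_mul_of_nonneg_left _ hc30.le
    refine le_trans ?_ hm.le
    exact pow_le_pow_of_le_one (inv_nonneg.2 hb0.le) (inv_lt_one_of_one_lt₀ hb1).le (by omega)
  -- choice of `ka`
  have hsa := hωa.summable
  obtain ⟨ka, hka⟩ : ∃ ka : ℕ, ∀ n, ka ≤ n → ∑' k : ℕ, ωa ((1/2:ℝ)^(k+n+1)) ≤ δ := by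
    have := tendsto_sum_nat_add (fun k : ℕ => ωa ((1/2:ℝ)^(k+1)))
    have h2 := (this.eventually (ge_mem_nhds hδ0)).exists_forall_of_atTop
    exact h2
  set k1 : ℕ := m + 2 + ka with hk1
  set C5 : ℝ := 2 * b^(k1+2) / (b - 1) + c3 * (1 + δ) with hC5
  have hb10 : 0 < b - 1 := by linarith
  have hC50 : 0 < C5 := by positivity
  have h1t : 0 < 1 - t := by linarith
  set C6 : ℝ := (1 - t) ^ (-σ) * C5 with hC6
  have hC60 : 0 < C6 := by positivity
  refine ⟨4 ^ σ * (C6 / (1 - t)), by positivity, ?_⟩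
  intro A a f u ωf ωu M H
  have hM0 : 0 ≤ M := (abs_nonneg (u 0)).trans (H.hM 0)
  have hsu := H.hωu.summable
  have hsf := H.hωf.summable
  have hu0 : ∀ k : ℕ, 0 ≤ ωu ((1/2:ℝ)^(k+1)) := fun k => H.hωu.1 _ (by positivity)
  have hf0 : ∀ k : ℕ, 0 ≤ ωf ((1/2:ℝ)^(k+1)) := fun k => H.hωf.1 _ (by positivity)
  set U : ℝ := ∑' k : ℕ, ωu ((1/2:ℝ)^(k+1)) with hU
  set F : ℝ := ∑' k : ℕ, ωf ((1/2:ℝ)^(k+1)) with hF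
  have hU0 : 0 ≤ U := tsum_nonneg hu0
  have hF0 : 0 ≤ F := tsum_nonneg hf0
  have hSS0 : ∀ ρ, 0 ≤ SS σ u ρ := fun ρ =>
    tsum_nonneg fun k => mul_nonneg (by positivity) (DD_nonneg _ _ k)
  -- the main one-step inequality for the sums
  have main : ∀ ρ ρ' : ℝ, ρ' ≤ 3/4 → 0 < ρ' - ρ → ρ' - ρ ≤ 1 →
      SS σ u ρ ≤ q * SS σ u ρ' + (ρ' - ρ) ^ (-σ) * (C5 * (M + U + F)) := by
    intro ρ ρ' hρ' hg0 hg1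
    set g := ρ' - ρ with hg
    obtain ⟨n, hn1, hn2⟩ := exists_nat_pow_near_of_lt_one hg0 hg1
        (by norm_num : (0:ℝ) < 1/2) (by norm_num)
    set k0 : ℕ := n + 1 + k1 with hk0
    have hs := H.summ (ρ := ρ) (by linarith)
    have hs' := H.summ hρ'
    rw [← hb] at hs hs'
    have hSe : SS σ u ρ' = ∑' k, b ^ k * DD u ρ' k := rfl
    have hgs1 : 1 ≤ g ^ (-σ) := by
      rw [Real.rpow_neg hg0.le]
      exact (one_le_inv₀ (by positivity)).2 (Real.rpow_le_one hg0.le hg1 hσ0.le)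
    have hgs : b ^ n ≤ g ^ (-σ) := by
      rw [hb, ← half_pow_rpow]
      exact Real.rpow_le_rpow_of_nonpos hg0 hn2 (by linarith)
    -- the head
    have head : ∑ i ∈ Finset.range (k0+1), b^i * DD u ρ i ≤
        g^(-σ) * ((2 * b^(k1+2) / (b - 1)) * M) := by
      have h1 : ∑ i ∈ Finset.range (k0+1), b^i * DD u ρ i ≤
          ∑ i ∈ Finset.range (k0+1), b^i * (2 * M) :=
        Finset.sum_le_sum fun i _ => by
          have := DD_le_two H.hM ρ i
          gcongr
      rw [← Finset.sum_mul, geom_sum_eq hb1.ne'] at h1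
      refine h1.trans ?_
      have h2 : b^(k0+1) = b^n * b^(k1+2) := by rw [← pow_add]; congr 1; omega
      have h3 : (b^(k0+1) - 1) / (b - 1) * (2 * M) ≤ (b^n * b^(k1+2)) / (b - 1) * (2 * M) := by
        rw [h2]; gcongr; linarith
      refine h3.trans ?_
      calc (b^n * b^(k1+2)) / (b - 1) * (2 * M) = b^n * ((2 * b^(k1+2) / (b - 1)) * M) := by ring
        _ ≤ _ := by gcongr
    -- the tail
    have hstep : ∀ k : ℕ, b^(k+(k0+1)) * DD u ρ (k+(k0+1)) ≤
        q0 * (b^(k+k0) * DD u ρ' (k+k0)) + c3 * ((b^m)⁻¹ * (b^(k+(k0+1)) * DD u ρ' (k+(k0+1)))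
          + g^(-σ) * ωu ((1/2:ℝ)^(k+k0+1)) + ωf ((1/2:ℝ)^(k+k0+1))
          + ωa ((1/2:ℝ)^(k+k0+1)) * (SS σ u ρ' + M)) := by
      intro k
      refine H.step hc0 hc hm1 hρ' hs' (k := k + k0) ?_
      refine le_trans ?_ hn1.le
      have e : (1/2:ℝ)^(k+k0+1) = (1/2)^(m+2) * (1/2)^(n+1) * (1/2)^(k+ka+1) := by
        rw [← pow_add, ← pow_add]; congr 1; omega
      have e2 : (4:ℝ) * (2^m * ((1/2)^(m+2) * (1/2)^(n+1) * (1/2)^(k+ka+1)))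
          = (1/2)^(n+1) * (1/2)^(k+ka+1) := by
        have : (2:ℝ)^m * (1/2)^m = 1 := by rw [← mul_pow]; norm_num
        rw [pow_add (1/2:ℝ) m 2]
        linear_combination ((1/2:ℝ)^(n+1) * (1/2)^(k+ka+1)) * this
      rw [e, e2]
      exact mul_le_of_le_one_right (by positivity) (pow_le_one₀ (by norm_num) (by norm_num))
    have sA : Summable fun k : ℕ => b^(k+k0) * DD u ρ' (k+k0) := 
      (summable_nat_add_iff (f := fun k : ℕ => b^k * DD u ρ' k) k0).2 hs'
    have sB : Summable fun k : ℕ => b^(k+(k0+1)) * DD u ρ' (k+(k0+1)) :=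
      (summable_nat_add_iff (f := fun k : ℕ => b^k * DD u ρ' k) (k0+1)).2 hs'
    have sU : Summable fun k : ℕ => ωu ((1/2:ℝ)^(k+k0+1)) := 
      (summable_nat_add_iff (f := fun k : ℕ => ωu ((1/2:ℝ)^(k+1))) k0).2 hsu
    have sF : Summable fun k : ℕ => ωf ((1/2:ℝ)^(k+k0+1)) := 
      (summable_nat_add_iff (f := fun k : ℕ => ωf ((1/2:ℝ)^(k+1))) k0).2 hsf
    have sW : Summable fun k : ℕ => ωa ((1/2:ℝ)^(k+k0+1)) := 
      (summable_nat_add_iff (f := fun k : ℕ => ωa ((1/2:ℝ)^(k+1))) k0).2 hsa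
    have taille : ∀ {g : ℕ → ℝ} (n : ℕ), (∀ k, 0 ≤ g k) → Summable g →
        ∑' k, g (k + n) ≤ ∑' k, g k := by
      intro g n hg0 hg
      rw [← hg.sum_add_tsum_nat_add n]
      have := Finset.sum_nonneg (s := Finset.range n) (fun i _ => hg0 i)
      linarith
    have hDD0 : ∀ k, 0 ≤ b^k * DD u ρ' k := fun k => mul_nonneg (by positivity) (DD_nonneg _ _ k)
    have lA : ∑' k : ℕ, b^(k+k0) * DD u ρ' (k+k0) ≤ SS σ u ρ' := taille (g := fun k : ℕ => b^k * DD u ρ' k) k0 hDD0 hs'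
    have lB : ∑' k : ℕ, b^(k+(k0+1)) * DD u ρ' (k+(k0+1)) ≤ SS σ u ρ' :=
      taille (g := fun k : ℕ => b^k * DD u ρ' k) (k0+1) hDD0 hs'
    have lU : ∑' k : ℕ, ωu ((1/2:ℝ)^(k+k0+1)) ≤ U :=
      taille (g := fun k : ℕ => ωu ((1/2:ℝ)^(k+1))) k0 hu0 hsu
    have lF : ∑' k : ℕ, ωf ((1/2:ℝ)^(k+k0+1)) ≤ F :=
      taille (g := fun k : ℕ => ωf ((1/2:ℝ)^(k+1))) k0 hf0 hsf
    have lW : ∑' k : ℕ, ωa ((1/2:ℝ)^(k+k0+1)) ≤ δ := hka k0 (by omega)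
    have hS' := hSS0 ρ'
    have tail : ∑' k : ℕ, b^(k+(k0+1)) * DD u ρ (k+(k0+1)) ≤ q0 * SS σ u ρ' +
        c3 * ((b^m)⁻¹ * SS σ u ρ' + g^(-σ) * U + F + δ * (SS σ u ρ' + M)) := by
      have hS := ((sA.hasSum.mul_left q0).add (((((sB.hasSum.mul_left (b^m)⁻¹).add
        (sU.hasSum.mul_left (g^(-σ)))).add sF.hasSum).add
          (sW.hasSum.mul_right (SS σ u ρ' + M))).mul_left c3))
      have h1 := hasSum_le hstep ((summable_nat_add_iff (k0+1)).2 hs).hasSum hS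
      refine h1.trans ?_
      gcongr
    have hsplit : SS σ u ρ = ∑ i ∈ Finset.range (k0+1), b^i * DD u ρ i
        + ∑' k : ℕ, b^(k+(k0+1)) * DD u ρ (k+(k0+1)) := (hs.sum_add_tsum_nat_add (k0+1)).symm
    have hfin : c3 * ((b^m)⁻¹ * SS σ u ρ' + g^(-σ) * U + F + δ * (SS σ u ρ' + M)) ≤
        (q - q0) * SS σ u ρ' + g^(-σ) * (c3 * (1 + δ) * (M + U + F)) := by
      have a1 : c3 * (b^m)⁻¹ * SS σ u ρ' ≤ (q - q0) / 2 * SS σ u ρ' := by gcongr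
      have a2 : c3 * δ * SS σ u ρ' = (q - q0) / 2 * SS σ u ρ' := by rw [hδe]
      have a3 : c3 * F ≤ g^(-σ) * (c3 * F) := le_mul_of_one_le_left (by positivity) hgs1
      have a4 : c3 * δ * M ≤ g^(-σ) * (c3 * δ * M) := le_mul_of_one_le_left (by positivity) hgs1
      have a5 : 0 ≤ g^(-σ) * (c3 * M) := by positivity
      have a6 : 0 ≤ g^(-σ) * (c3 * δ * (U + F)) := by positivity
      linarith
    have hUF : g^(-σ) * ((2 * b^(k1+2) / (b - 1)) * M) ≤
        g^(-σ) * ((2 * b^(k1+2) / (b - 1)) * (M + U + F)) := by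
      gcongr; linarith
    rw [hsplit, hC5]
    linarith
  -- weighted contraction
  have hcon := contract (fun ρ => (3/4 - ρ) ^ σ * SS σ u ρ) (Set.Ico (1/2) (3/4)) t
    (SS σ u (3/4)) (C6 * (M + U + F)) ht0.le ht1 (by positivity) ?_ ?_ (1/2)
    ⟨le_rfl, by norm_num⟩
  · have e : (3/4 - 1/2 : ℝ) = 4⁻¹ := by norm_num
    rw [e, Real.inv_rpow (by norm_num), inv_mul_le_iff₀ (by positivity)] at hcon
    calc _ ≤ _ := hcon
      _ = _ := by ring
  · intro ρ hρ
    have h1 : SS σ u ρ ≤ SS σ u (3/4) := H.SS_mono hρ.2.le le_rfl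
    have h2 : (3/4 - ρ) ^ σ ≤ 1 :=
      Real.rpow_le_one (by linarith [hρ.2]) (by linarith [hρ.1]) hσ0.le
    exact (mul_le_of_le_one_left (hSS0 ρ) h2).trans h1
  · intro ρ hρ
    have hs0 : 0 < 3/4 - ρ := by linarith [hρ.2]
    have hs1 : 3/4 - ρ ≤ 1/4 := by linarith [hρ.1]
    set s : ℝ := 3/4 - ρ with hs
    have hts0 : 0 < t * s := mul_pos ht0 hs0
    have hts1 : t * s ≤ s := mul_le_of_le_one_left hs0.le ht1.le
    have hgp : 0 < (1 - t) * s := mul_pos h1t hs0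
    have hgl : (1 - t) * s ≤ 1 := by
      have h5 : (1 - t) * s ≤ s := mul_le_of_le_one_left hs0.le (sub_le_self 1 ht0.le)
      exact h5.trans (hs1.trans (by norm_num))
    have hlo : (1/2 : ℝ) ≤ 3/4 - t * s :=
      le_sub_comm.1 ((hts1.trans hs1).trans (by norm_num))
    refine ⟨3/4 - t * s, ⟨hlo, sub_lt_self _ hts0⟩, ?_⟩
    have hgap : 3/4 - t * s - ρ = (1 - t) * s := by rw [hs]; ring
    have h1 := main ρ (3/4 - t * s) (sub_le_self _ hts0.le) (by rw [hgap]; exact hgp)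
      (by rw [hgap]; exact hgl)
    rw [hgap, Real.mul_rpow h1t.le hs0.le] at h1
    simp only [sub_sub_cancel]
    rw [Real.mul_rpow ht0.le hs0.le]
    have hsσ : 0 < s ^ σ := by positivity
    have hinv : s ^ σ * s ^ (-σ) = 1 := by rw [← Real.rpow_add hs0]; simp
    have h2 := mul_le_mul_of_nonneg_left h1 hsσ.le
    have hqle : q ≤ t * t ^ σ := by rw [← htt]; gcongr
    have h3 : q * (s ^ σ * SS σ u (3/4 - t * s)) ≤ t * t ^ σ * (s ^ σ * SS σ u (3/4 - t * s)) :=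
      mul_le_mul_of_nonneg_right hqle (mul_nonneg hsσ.le (hSS0 _))
    have h4 : s ^ σ * ((1 - t) ^ (-σ) * s ^ (-σ) * (C5 * (M + U + F))) = C6 * (M + U + F) := by
      rw [hC6]; linear_combination ((1 - t) ^ (-σ) * (C5 * (M + U + F))) * hinv
    linarith

/-- Dini estimate for concave fully nonlinear nonlocal elliptic equations, `σ ∈ (0,1)`. -/
theorem dini_estimate_order_lt_one
    (d : ℕ) (hd : 1 ≤ d) (σ lam Lam : ℝ)
    (hσ : σ ∈ Set.Ioo (0:ℝ) 1) (hlam : 0 < lam) (hlamLam : lam ≤ Lam)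
    (ωa : ℝ → ℝ) (hωa : IsDini ωa) :
    ∃ C : ℝ, 0 < C ∧
      ∀ (A : Type) [Nonempty A]
        (a : A → EuclideanSpace ℝ (Fin d) → EuclideanSpace ℝ (Fin d) → ℝ)
        (f : A → EuclideanSpace ℝ (Fin d) → ℝ)
        (u : EuclideanSpace ℝ (Fin d) → ℝ) (ωf ωu : ℝ → ℝ) (ε : ℝ),
        -- (a) ellipticity, measurability in `y`, Dini continuity of the coefficients
        (∀ β x y, a β x y ∈ Set.Icc lam Lam) →
        (∀ β x, Measurable (a β x)) →
        (∀ β x x' y, x ≠ x' → |a β x y - a β x' y| ≤ Lam * ωa ‖x - x'‖) →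
        -- (b) Dini continuity and boundedness of the data
        IsDini ωf →
        (∀ β, ∀ x ∈ ball (0:EuclideanSpace ℝ (Fin d)) 1,
          ∀ x' ∈ ball (0:EuclideanSpace ℝ (Fin d)) 1,
          x ≠ x' → |f β x - f β x'| ≤ ωf ‖x - x'‖) →
        (⨆ β, eSupNorm (ball (0:EuclideanSpace ℝ (Fin d)) 1) (f β)) < ⊤ →
        -- (c) regularity of `u`
        (∃ M : ℝ, ∀ x, |u x| ≤ M) →
        IsDini ωu →
        (∀ x x' : EuclideanSpace ℝ (Fin d), x ≠ x' → |u x - u x'| ≤ ωu ‖x - x'‖) →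
        ε ∈ Set.Ioo (0:ℝ) (1 - σ) →
        holderSemi (σ + ε) (ball (0:EuclideanSpace ℝ (Fin d)) 1) u < ⊤ →
        -- absolute integrability of the integrand of `L_β u`
        (∀ β, ∀ x ∈ ball (0:EuclideanSpace ℝ (Fin d)) 1,
          Integrable (fun y => (u (x + y) - u x) * a β x y * ‖y‖ ^ (-(d:ℝ) - σ))) →
        -- (d) `u` solves `inf_β (L_β u + f_β) = 0` in `B_1`
        (∀ x ∈ ball (0:EuclideanSpace ℝ (Fin d)) 1,
          IsGLB {v : ℝ | ∃ β, v =
            (∫ y, (u (x + y) - u x) * a β x y * ‖y‖ ^ (-(d:ℝ) - σ)) + f β x} 0) →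
        -- conclusion
        (holderSemi σ (ball (0:EuclideanSpace ℝ (Fin d)) (1/2)) u ≤
            ENNReal.ofReal C * eSupNorm (Set.univ) u
            + ENNReal.ofReal C * (⨆ β, eSupNorm (ball (0:EuclideanSpace ℝ (Fin d)) 1) (f β))
            + ENNReal.ofReal C *
              ∑' j : ℕ, ENNReal.ofReal
                (ωu (2 ^ (-((j:ℝ) + 1))) + ωf (2 ^ (-((j:ℝ) + 1)))) ) ∧
          Tendsto (fun r : ℝ => ⨆ x0 ∈ ball (0:EuclideanSpace ℝ (Fin d)) (1/2),
              holderSemi σ (ball x0 r) u)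
            (𝓝[>] (0:ℝ)) (𝓝 (0:ℝ≥0∞)) := by
  obtain ⟨C0, hC0, hap⟩ := apriori d hd σ lam Lam hσ.1 hσ.2 hlam hlamLam ωa hωa
  have hb0 : (0:ℝ) < 2 ^ σ := by positivity
  refine ⟨2 ^ σ * C0, by positivity, ?_⟩
  intro A hA a f u ωf ωu ε hIcc hmeas hacont hωf hfcont hfsup hubd hωu hucont hε hhol hint hglb
  -- the Hölder bound in real form
  set Hc : ℝ := (holderSemi (σ + ε) (ball (0:EuclideanSpace ℝ (Fin d)) 1) u).toReal with hHc
  have hHc0 : 0 ≤ Hc := ENNReal.toReal_nonneg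
  have hholR : ∀ x ∈ ball (0:EE d) 1, ∀ x' ∈ ball (0:EE d) 1,
      |u x - u x'| ≤ Hc * ‖x - x'‖ ^ (σ + ε) := by
    intro x hx x' hx'
    by_cases hne : x = x'
    · subst hne
      have : 0 ≤ Hc * ‖x - x‖ ^ (σ + ε) := by positivity
      simpa using this
    · have hpos : 0 < ‖x - x'‖ := norm_pos_iff.2 (sub_ne_zero.2 hne)
      have h1 : ENNReal.ofReal (‖u x - u x'‖ / ‖x - x'‖ ^ (σ + ε)) ≤
          holderSemi (σ + ε) (ball (0:EuclideanSpace ℝ (Fin d)) 1) u :=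
        le_iSup_of_le x <| le_iSup_of_le hx <| le_iSup_of_le x' <| le_iSup_of_le hx' <|
          le_iSup_of_le hne le_rfl
      have h2 := (ENNReal.ofReal_le_iff_le_toReal hhol.ne).1 h1
      rwa [div_le_iff₀ (by positivity), Real.norm_eq_abs] at h2
  -- the sup norm in real form
  obtain ⟨M0, hM0⟩ := hubd
  have hfin : eSupNorm (Set.univ) u ≠ ⊤ := by
    refine ne_top_of_le_ne_top (ENNReal.ofReal_ne_top (r := M0)) ?_
    exact iSup_le fun x => iSup_le fun _ => ENNReal.ofReal_le_ofReal (hM0 x)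
  set M : ℝ := (eSupNorm (Set.univ) u).toReal with hM
  have hMb : ∀ x, |u x| ≤ M := by
    intro x
    refine (ENNReal.ofReal_le_iff_le_toReal hfin).1 ?_
    exact le_iSup_of_le x <| le_iSup_of_le (Set.mem_univ x) le_rfl
  have H : Hyp d σ lam Lam ωa A a f u ωf ωu M :=
    { hd := hd, hσ0 := hσ.1, hσ1 := hσ.2, hlam := hlam, hlL := hlamLam, hωa := hωa, hne := hA
      hIcc := hIcc, hmeas := hmeas, hacont := hacont, hωf := hωf, hfcont := hfcont
      hM := hMb, hωu := hωu, hucont := hucont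
      hHol := ⟨Hc, ε, hHc0, hε.1, hholR⟩
      hint := hint
      hsol := by
        intro x hx
        have hg := hglb x hx
        refine ⟨fun β => hg.1 ⟨β, rfl⟩, fun e he => ?_⟩
        obtain ⟨v, ⟨β, rfl⟩, -, hv⟩ := hg.exists_between he
        exact ⟨β, hv⟩ }
  constructor
  · have hS := hap A a f u ωf ωu M H
    have hMn : 0 ≤ M := ENNReal.toReal_nonneg
    have hsu := hωu.summable
    have hsf := hωf.summable
    have hu0 : ∀ k : ℕ, 0 ≤ ωu ((1/2:ℝ)^(k+1)) := fun k => hωu.1 _ (by positivity)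
    have hf0 : ∀ k : ℕ, 0 ≤ ωf ((1/2:ℝ)^(k+1)) := fun k => hωf.1 _ (by positivity)
    have hbound : holderSemi σ (ball (0:EuclideanSpace ℝ (Fin d)) (1/2)) u ≤
        ENNReal.ofReal (2 ^ σ * SS σ u (1/2)) := by
      refine iSup_le fun x => iSup_le fun hx => iSup_le fun y => iSup_le fun hy =>
        iSup_le fun hxy => ENNReal.ofReal_le_ofReal ?_
      have hpos : 0 < ‖y - x‖ := norm_pos_iff.2 (sub_ne_zero.2 (Ne.symm hxy))
      rw [mem_ball_zero_iff] at hx hy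
      have hle1 : ‖y - x‖ ≤ 1 := by linarith [norm_sub_le y x]
      obtain ⟨k, hk1, hk2⟩ := exists_nat_pow_near_of_lt_one hpos hle1
        (by norm_num : (0:ℝ) < 1/2) (by norm_num)
      have h1 : |u (x + (y - x)) - u x| ≤ DD u (1/2) k := le_DD hMb hx hk2
      rw [add_sub_cancel, abs_sub_comm] at h1
      rw [norm_sub_rev x y, div_le_iff₀ (by positivity), Real.norm_eq_abs]
      refine h1.trans ?_
      have h2 : ((2:ℝ) ^ σ) ^ k * DD u (1/2) k ≤ SS σ u (1/2) :=
        (H.summ (by norm_num)).le_tsum k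
          (fun j _ => mul_nonneg (by positivity) (DD_nonneg _ _ _))
      have h3 : 1 ≤ ((2:ℝ)^σ)^(k+1) * ‖y - x‖ ^ σ := by
        rw [← half_pow_rpow, Real.rpow_neg (by positivity), inv_mul_eq_div,
          one_le_div (by positivity)]
        exact Real.rpow_le_rpow (by positivity) hk1.le hσ.1.le
      have hD0 := DD_nonneg u (1/2) k
      calc DD u (1/2) k ≤ (((2:ℝ)^σ)^(k+1) * ‖y - x‖ ^ σ) * DD u (1/2) k :=
            le_mul_of_one_le_left hD0 h3
        _ = 2 ^ σ * (((2:ℝ) ^ σ) ^ k * DD u (1/2) k) * ‖y - x‖ ^ σ := by rw [pow_succ]; ring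
        _ ≤ _ := by gcongr
    have hsum : ∑' j : ℕ, ENNReal.ofReal
        (ωu (2 ^ (-((j:ℝ) + 1))) + ωf (2 ^ (-((j:ℝ) + 1)))) =
        ENNReal.ofReal ((∑' k : ℕ, ωu ((1/2:ℝ)^(k+1))) + ∑' k : ℕ, ωf ((1/2:ℝ)^(k+1))) := by
      have e : ∀ j : ℕ, (2:ℝ) ^ (-((j:ℝ) + 1)) = (1/2:ℝ)^(j+1) := by
        intro j
        rw [Real.rpow_neg (by norm_num), one_div, inv_pow, ← Real.rpow_natCast]
        push_cast; rfl
      simp_rw [e]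
      rw [← hsu.tsum_add hsf, ENNReal.ofReal_tsum_of_nonneg
        (fun k => add_nonneg (hu0 k) (hf0 k)) (hsu.add hsf)]
    have hU0 : 0 ≤ ∑' k : ℕ, ωu ((1/2:ℝ)^(k+1)) := tsum_nonneg hu0
    have hF0 : 0 ≤ ∑' k : ℕ, ωf ((1/2:ℝ)^(k+1)) := tsum_nonneg hf0
    refine hbound.trans ?_
    rw [hsum]
    have hMe : eSupNorm (Set.univ) u = ENNReal.ofReal M := (ENNReal.ofReal_toReal hfin).symm
    rw [hMe]
    calc ENNReal.ofReal (2 ^ σ * SS σ u (1/2)) ≤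
        ENNReal.ofReal (2 ^ σ * C0 * M + 2 ^ σ * C0 *
          ((∑' k : ℕ, ωu ((1/2:ℝ)^(k+1))) + ∑' k : ℕ, ωf ((1/2:ℝ)^(k+1)))) := by
          apply ENNReal.ofReal_le_ofReal
          have := mul_le_mul_of_nonneg_left hS hb0.le
          linarith
      _ = ENNReal.ofReal (2 ^ σ * C0) * ENNReal.ofReal M + ENNReal.ofReal (2 ^ σ * C0) *
          ENNReal.ofReal ((∑' k : ℕ, ωu ((1/2:ℝ)^(k+1))) + ∑' k : ℕ, ωf ((1/2:ℝ)^(k+1))) := by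
          have key : ∀ K X Y : ℝ, 0 ≤ K → 0 ≤ X → 0 ≤ Y → ENNReal.ofReal (K * X + K * Y) =
              ENNReal.ofReal K * ENNReal.ofReal X + ENNReal.ofReal K * ENNReal.ofReal Y := by
            intro K X Y hK hX hY
            rw [ENNReal.ofReal_add (mul_nonneg hK hX) (mul_nonneg hK hY),
              ENNReal.ofReal_mul hK, ENNReal.ofReal_mul hK]
          exact key _ _ _ (by positivity) (by positivity) (by positivity)
      _ ≤ _ := by
          gcongr
          exact le_self_add
  · have hlim : Tendsto (fun r : ℝ => ENNReal.ofReal (Hc * (2 * r) ^ ε)) (𝓝[>] (0:ℝ))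
        (𝓝 (0:ℝ≥0∞)) := by
      have hcont : Continuous (fun r : ℝ => ENNReal.ofReal (Hc * (2 * r) ^ ε)) := by
        refine ENNReal.continuous_ofReal.comp (continuous_const.mul ?_)
        exact (continuous_const.mul continuous_id).rpow_const (fun _ => Or.inr hε.1.le)
      have := (hcont.tendsto 0).mono_left (nhdsWithin_le_nhds (s := Set.Ioi 0))
      simpa [Real.zero_rpow hε.1.ne'] using this
    refine tendsto_of_tendsto_of_tendsto_of_le_of_le' tendsto_const_nhds hlim
      (Eventually.of_forall fun _ => zero_le) ?_
    have hev : Set.Ioo (0:ℝ) (1/2) ∈ 𝓝[>] (0:ℝ) := Ioo_mem_nhdsGT (by norm_num)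
    filter_upwards [hev] with r hr
    refine iSup_le fun x0 => iSup_le fun hx0 => iSup_le fun x => iSup_le fun hx =>
      iSup_le fun y => iSup_le fun hy => iSup_le fun hxy => ENNReal.ofReal_le_ofReal ?_
    have hpos : 0 < ‖x - y‖ := norm_pos_iff.2 (sub_ne_zero.2 hxy)
    rw [mem_ball_zero_iff] at hx0
    have hin : ∀ z ∈ ball x0 r, z ∈ ball (0:EE d) 1 := by
      intro z hz
      rw [mem_ball_iff_norm] at hz
      rw [mem_ball_zero_iff]
      have := norm_add_le (z - x0) x0
      rw [sub_add_cancel] at this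
      linarith [hr.2]
    have hd2 : ‖x - y‖ ≤ 2 * r := by
      rw [mem_ball] at hx hy
      have := dist_triangle_right x y x0
      rw [dist_eq_norm] at this
      linarith
    have h1 := hholR x (hin x hx) y (hin y hy)
    rw [div_le_iff₀ (by positivity), Real.norm_eq_abs]
    refine h1.trans ?_
    rw [Real.rpow_add hpos, mul_comm (‖x - y‖ ^ σ), ← mul_assoc]
    have := hε.1
    gcongr
end
end

section
/- Let d ≥ 1, σ ∈ (0,1), 0 < λ ≤ Λ < ∞, and let 𝒜 be a nonempty index set. Assume: (a) for each β ∈ 𝒜, λ ≤ a_β(x,y) ≤ Λ, a_β is measurable in y, and |a_β(x,y) − a_β(x',y)| ≤ Λ ω_a(|x − x'|) for all x, x', y, where ω_a is a Dini function; (b) each f_β : ℝ^d → ℝ satisfies |f_β(x) − f_β(x')| ≤ ω_f(|x − x'|) for all x, x' with ω_f a Dini function; (c) u : ℝ^d → ℝ is bounded and [u]_{σ+ε;ℝ^d} < ∞ for some ε ∈ (0, 1−σ); (d) u solves inf_{β∈𝒜}(L_β u + f_β) = 0 in all of ℝ^d. Then there exists a constant C > 0 depending only on d, λ, Λ, ω_a,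 σ such that [u]_{σ;ℝ^d} ≤ C‖u‖_{L_∞(ℝ^d)} + C Σ_{k=1}^∞ ω_f(2^{−k}). -/
open MeasureTheory Metric Filter Set
open scoped ENNReal Topology

noncomputable section

lemma pow_second_diff {p : ℝ} (hp0 : 0 < p) (hp1 : p < 1) :
    ∃ c : ℝ, 0 < c ∧ c ≤ 1 ∧ ∀ r t : ℝ, 0 < r → r / 4 ≤ t → t ≤ r / 2 →
      (r + t) ^ p + (r - t) ^ p ≤ (2 - c) * r ^ p := by
  have hcont : ContinuousOn (fun t : ℝ => (1 + t) ^ p + (1 - t) ^ p) (Set.Icc (1/4) (1/2)) := by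
    apply ContinuousOn.add
    · apply ContinuousOn.rpow_const (by fun_prop)
      intro x hx; right; exact hp0.le
    · apply ContinuousOn.rpow_const (by fun_prop)
      intro x hx; right; exact hp0.le
  obtain ⟨t0, ht0, hmax⟩ := isCompact_Icc.exists_isMaxOn (by norm_num : (Set.Icc (1/4:ℝ) (1/2)).Nonempty) hcont
  have hlt : (1 + t0) ^ p + (1 - t0) ^ p < 2 := by
    obtain ⟨-, hh⟩ := Real.strictConcaveOn_rpow hp0 hp1
    have hx1 : 1 + t0 ∈ Set.Ici (0:ℝ) := by simp only [Set.mem_Ici]; linarith [ht0.1]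
    have hx2 : 1 - t0 ∈ Set.Ici (0:ℝ) := by simp only [Set.mem_Ici]; linarith [ht0.2]
    have hne : 1 + t0 ≠ 1 - t0 := by intro h; linarith [ht0.1]
    have hsc := hh hx1 hx2 hne (by norm_num : (0:ℝ) < 1/2) (by norm_num : (0:ℝ) < 1/2) (by norm_num)
    simp only [smul_eq_mul] at hsc
    have : (1/2 * (1 + t0) + 1/2 * (1 - t0) : ℝ) = 1 := by ring
    rw [this, Real.one_rpow] at hsc
    linarith
  refine ⟨min 1 (2 - ((1 + t0) ^ p + (1 - t0) ^ p)), lt_min one_pos (by linarith), min_le_left _ _, ?_⟩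
  intro r t hr h1 h2
  have hm : (1 + t / r) ^ p + (1 - t / r) ^ p ≤ (1 + t0) ^ p + (1 - t0) ^ p := by
    apply hmax
    constructor
    · rw [le_div_iff₀ hr]; linarith
    · rw [div_le_iff₀ hr]; linarith
  have e1 : (r + t) ^ p = r ^ p * (1 + t / r) ^ p := by
    rw [← Real.mul_rpow hr.le (by have : 0 ≤ t / r := div_nonneg (by linarith) hr.le
                                  linarith)]
    congr 1; field_simp
  have e2 : (r - t) ^ p = r ^ p * (1 - t / r) ^ p := by
    rw [← Real.mul_rpow hr.le (by have : t / r ≤ 1 := by rw [div_le_iff₀ hr]; linarith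
                                  linarith)]
    congr 1; field_simp
  rw [e1, e2, ← mul_add, mul_comm]
  apply mul_le_mul_of_nonneg_right _ (Real.rpow_nonneg hr.le p)
  have := min_le_right 1 (2 - ((1 + t0) ^ p + (1 - t0) ^ p))
  linarith

/-- building block of the modulus of continuity. -/
def gfun (σ κ τ r : ℝ) : ℝ := min (r ^ (σ + κ) * τ ^ (-κ)) (r ^ (σ - κ) * τ ^ κ)

lemma gfun_nonneg {σ κ τ r : ℝ} (hτ : 0 < τ) (hr : 0 ≤ r) : 0 ≤ gfun σ κ τ r := by
  unfold gfun; apply le_min <;> positivity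

lemma gfun_le {σ κ τ r : ℝ} (hκ : 0 < κ) (hτ : 0 < τ) (hr : 0 < r) : gfun σ κ τ r ≤ r ^ σ := by
  unfold gfun
  rcases le_total r τ with h | h
  · apply (min_le_left _ _).trans
    rw [Real.rpow_add hr, Real.rpow_neg hτ.le, mul_assoc]
    apply mul_le_of_le_one_right (by positivity)
    rw [← div_eq_mul_inv, div_le_one (by positivity)]
    exact Real.rpow_le_rpow hr.le h hκ.le
  · apply (min_le_right _ _).trans
    rw [Real.rpow_sub hr, div_mul_eq_mul_div, div_le_iff₀ (by positivity)]
    exact mul_le_mul_of_nonneg_left (Real.rpow_le_rpow hτ.le h hκ.le) (by positivity)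

lemma gfun_mono {σ κ τ r r' : ℝ} (hκ : 0 < κ) (hκσ : κ < σ) (hτ : 0 < τ) (hr : 0 ≤ r) (h : r ≤ r') :
    gfun σ κ τ r ≤ gfun σ κ τ r' := by
  unfold gfun
  apply min_le_min
  · exact mul_le_mul_of_nonneg_right (Real.rpow_le_rpow hr h (by linarith)) (by positivity)
  · exact mul_le_mul_of_nonneg_right (Real.rpow_le_rpow hr h (by linarith)) (by positivity)

lemma gfun_lower {σ κ τ r : ℝ} (hκ : 0 < κ) (hκ1 : κ ≤ 1) (hr : 0 < r) (h1 : τ / 2 ≤ r)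
    (h2 : r ≤ τ) : r ^ σ / 2 ≤ gfun σ κ τ r := by
  have hτ : 0 < τ := by linarith
  unfold gfun
  apply le_min
  · rw [Real.rpow_add hr, Real.rpow_neg hτ.le, mul_assoc, div_eq_mul_inv]
    apply mul_le_mul_of_nonneg_left _ (by positivity)
    rw [← div_eq_mul_inv, ← Real.div_rpow hr.le hτ.le]
    have h3 : (1/2 : ℝ) ≤ r / τ := by rw [le_div_iff₀ hτ]; linarith
    calc (2⁻¹ : ℝ) ≤ r / τ := by linarith
      _ = (r / τ) ^ (1:ℝ) := by simp
      _ ≤ (r / τ) ^ κ := Real.rpow_le_rpow_of_exponent_ge (by positivity)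
          (by rw [div_le_one hτ]; exact h2) hκ1
  · rw [Real.rpow_sub hr, div_mul_eq_mul_div, le_div_iff₀ (by positivity), div_mul_eq_mul_div,
      div_le_iff₀ (by norm_num), mul_assoc]
    apply mul_le_mul_of_nonneg_left _ (by positivity)
    have := Real.rpow_le_rpow hr.le h2 hκ.le
    have : 0 ≤ τ ^ κ := by positivity
    linarith

lemma gfun_second_diff {σ κ : ℝ} (hκ : 0 < κ) (hκσ : κ < σ) (hκ1 : σ + κ < 1) :
    ∃ c : ℝ, 0 < c ∧ c ≤ 1 ∧ ∀ τ r t : ℝ, 0 < τ → 0 < r → r / 4 ≤ t → t ≤ r / 2 →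
      gfun σ κ τ (r + t) + gfun σ κ τ (r - t) ≤ (2 - c) * gfun σ κ τ r := by
  obtain ⟨c1, h1, h1', H1⟩ := pow_second_diff (p := σ + κ) (by linarith) hκ1
  obtain ⟨c2, h2, h2', H2⟩ := pow_second_diff (p := σ - κ) (by linarith) (by linarith)
  refine ⟨min c1 c2, lt_min h1 h2, (min_le_left _ _).trans h1', ?_⟩
  intro τ r t hτ hr ht1 ht2
  have a1 := H1 r t hr ht1 ht2
  have a2 := H2 r t hr ht1 ht2
  have m1 := min_le_left c1 c2
  have m2 := min_le_right c1 c2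
  have p1 : 0 ≤ r ^ (σ + κ) := by positivity
  have p2 : 0 ≤ r ^ (σ - κ) := by positivity
  have q1 : 0 ≤ τ ^ (-κ) := by positivity
  have q2 : 0 ≤ τ ^ κ := by positivity
  unfold gfun
  rcases min_choice (r ^ (σ + κ) * τ ^ (-κ)) (r ^ (σ - κ) * τ ^ κ) with h | h
  · rw [h]
    refine (add_le_add (min_le_left _ _) (min_le_left _ _)).trans ?_
    rw [← add_mul, ← mul_assoc]
    apply mul_le_mul_of_nonneg_right _ q1
    nlinarith
  · rw [h]
    refine (add_le_add (min_le_right _ _) (min_le_right _ _)).trans ?_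
    rw [← add_mul, ← mul_assoc]
    apply mul_le_mul_of_nonneg_right _ q2
    nlinarith

lemma integrable_min_kernel {d : ℕ} (hd : 1 ≤ d) {σ p q : ℝ} (hp : σ < p) (hq : q < σ) :
    Integrable (fun y : EuclideanSpace ℝ (Fin d) =>
      min (‖y‖ ^ p) (‖y‖ ^ q) * ‖y‖ ^ (-(d:ℝ) - σ)) := by
  have : Nonempty (Fin d) := ⟨⟨0, hd⟩⟩
  have hfr : Module.finrank ℝ (EuclideanSpace ℝ (Fin d)) = d := by simp
  have key := (integrable_fun_norm_addHaar (volume : Measure (EuclideanSpace ℝ (Fin d)))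
    (f := fun r : ℝ => min (r ^ p) (r ^ q) * r ^ (-(d:ℝ) - σ))).2
  apply key
  rw [hfr]
  have hmeas : Measurable (fun r : ℝ => r ^ (d - 1) • (min (r ^ p) (r ^ q) * r ^ (-(d:ℝ) - σ))) := by
    simp only [smul_eq_mul]
    fun_prop
  have hrw : ∀ (s r : ℝ), 0 < r → r ^ (d - 1) * (r ^ s * r ^ (-(d:ℝ) - σ)) = r ^ (s - 1 - σ) := by
    intro s r hr
    rw [← Real.rpow_natCast, ← Real.rpow_add hr, ← Real.rpow_add hr]
    congr 1
    push_cast [Nat.cast_sub hd]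
    ring
  rw [← Set.Ioc_union_Ioi_eq_Ioi (zero_le_one' ℝ)]
  apply IntegrableOn.union
  · have h1 : IntegrableOn (fun x : ℝ => x ^ (p - 1 - σ)) (Set.Ioc 0 1) := by
      rw [integrableOn_Ioc_iff_integrableOn_Ioo]
      rw [intervalIntegral.integrableOn_Ioo_rpow_iff one_pos]; linarith
    refine Integrable.mono' h1 hmeas.aestronglyMeasurable ?_
    filter_upwards [ae_restrict_mem measurableSet_Ioc] with r hr
    have hr0 : 0 < r := hr.1
    rw [Real.norm_of_nonneg (by positivity), ← hrw p r hr0, smul_eq_mul]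
    gcongr
    exact min_le_left _ _
  · have h1 : IntegrableOn (fun x : ℝ => x ^ (q - 1 - σ)) (Set.Ioi 1) :=
      integrableOn_Ioi_rpow_of_lt (by linarith) one_pos
    refine Integrable.mono' h1 hmeas.aestronglyMeasurable ?_
    filter_upwards [ae_restrict_mem measurableSet_Ioi] with r hr
    have hr0 : 0 < r := one_pos.trans hr
    rw [Real.norm_of_nonneg (by positivity), ← hrw q r hr0, smul_eq_mul]
    gcongr
    exact min_le_right _ _

lemma gfun_integral {d : ℕ} (hd : 1 ≤ d) {σ κ : ℝ} (hκ : 0 < κ) :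
    ∃ C : ℝ, 0 ≤ C ∧ ∀ τ : ℝ, 0 < τ →
      ∫⁻ y : EuclideanSpace ℝ (Fin d), ENNReal.ofReal (gfun σ κ τ ‖y‖ * ‖y‖ ^ (-(d:ℝ) - σ))
        ≤ ENNReal.ofReal C := by
  have hintg := integrable_min_kernel hd (σ := σ) (p := σ + κ) (q := σ - κ) (by linarith) (by linarith)
  set F : EuclideanSpace ℝ (Fin d) → ℝ := fun y =>
      min (‖y‖ ^ (σ + κ)) (‖y‖ ^ (σ - κ)) * ‖y‖ ^ (-(d:ℝ) - σ) with hF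
  have hF0 : ∀ y, 0 ≤ F y := fun y => by simp only [hF]; positivity
  refine ⟨∫ y, F y, integral_nonneg hF0, ?_⟩
  intro τ hτ
  have hfr : Module.finrank ℝ (EuclideanSpace ℝ (Fin d)) = d := by simp
  have hscale : ∀ y : EuclideanSpace ℝ (Fin d),
      gfun σ κ τ ‖y‖ * ‖y‖ ^ (-(d:ℝ) - σ) = (τ ^ d)⁻¹ * F (τ⁻¹ • y) := by
    intro y
    have hn : ‖τ⁻¹ • y‖ = ‖y‖ * τ⁻¹ := by
      rw [norm_smul, Real.norm_of_nonneg (by positivity), mul_comm]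
    simp only [hF, hn, gfun]
    have hm : ∀ s : ℝ, (‖y‖ * τ⁻¹) ^ s = ‖y‖ ^ s * τ ^ (-s) := by
      intro s
      rw [Real.mul_rpow (norm_nonneg _) (by positivity), Real.inv_rpow hτ.le, Real.rpow_neg hτ.le]
    rw [hm, hm, hm]
    have e1 : τ ^ (-(σ + κ)) = τ ^ (-κ) * τ ^ (-σ) := by rw [← Real.rpow_add hτ]; congr 1; ring
    have e2 : τ ^ (-(σ - κ)) = τ ^ κ * τ ^ (-σ) := by rw [← Real.rpow_add hτ]; congr 1; ring
    have e3 : τ ^ (-(-(d:ℝ) - σ)) = τ ^ d * τ ^ σ := by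
      rw [← Real.rpow_natCast, ← Real.rpow_add hτ]; congr 1; ring
    rw [e1, e2, e3, ← mul_assoc (‖y‖ ^ (σ + κ)), ← mul_assoc (‖y‖ ^ (σ - κ)), ← min_mul_of_nonneg _ _ (by positivity : 0 ≤ τ ^ (-σ))]
    have e4 : τ ^ (-σ) * τ ^ σ = 1 := by rw [← Real.rpow_add hτ]; simp
    have e5 : (τ ^ d)⁻¹ * τ ^ d = 1 := inv_mul_cancel₀ (by positivity)
    linear_combination (-1) * (min (‖y‖ ^ (σ + κ) * τ ^ (-κ)) (‖y‖ ^ (σ - κ) * τ ^ κ) *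
      ‖y‖ ^ (-(d:ℝ) - σ)) * (e4 * ((τ ^ d)⁻¹ * τ ^ d) + e5)
  have hintg2 : Integrable (fun y => (τ ^ d)⁻¹ * F (τ⁻¹ • y)) :=
    (hintg.comp_smul (by positivity : τ⁻¹ ≠ 0)).const_mul _
  simp_rw [hscale]
  rw [← ofReal_integral_eq_lintegral_ofReal hintg2 (ae_of_all _ fun y => mul_nonneg (by positivity) (hF0 _))]
  apply ENNReal.ofReal_le_ofReal
  rw [integral_const_mul, Measure.integral_comp_smul, hfr, smul_eq_mul, ← mul_assoc]
  rw [inv_pow, inv_inv, abs_of_nonneg (by positivity), inv_mul_cancel₀ (by positivity), one_mul]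


lemma small_integral {d : ℕ} (hd : 1 ≤ d) {σ p H : ℝ} (hσ : 0 < σ) (hp : σ < p) (hH : 0 ≤ H) :
    Tendsto (fun η : ℝ => ∫ y : EuclideanSpace ℝ (Fin d),
      min (H * ‖y‖ ^ p) η * ‖y‖ ^ (-(d:ℝ) - σ)) (𝓝[>] 0) (𝓝 0) := by
  have hintg := integrable_min_kernel hd (σ := σ) (p := p) (q := 0) hp hσ
  have h0 : 𝓝 (0:ℝ) = 𝓝 (∫ y : EuclideanSpace ℝ (Fin d), (0:ℝ)) := by simp
  refine Tendsto.mono_right ?_ h0.ge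
  apply tendsto_integral_filter_of_dominated_convergence _ _ _ (hintg.const_mul (max H 1)) _
  · refine Eventually.of_forall fun η => ?_
    apply Measurable.aestronglyMeasurable
    fun_prop
  · filter_upwards [Ioo_mem_nhdsGT (zero_lt_one' ℝ)] with η hη
    refine ae_of_all _ fun y => ?_
    have hη0 : 0 ≤ η := hη.1.le
    rw [Real.norm_of_nonneg (by positivity), ← mul_assoc]
    apply mul_le_mul_of_nonneg_right _ (by positivity)
    rw [mul_min_of_nonneg _ _ (by positivity)]
    apply min_le_min
    · exact mul_le_mul_of_nonneg_right (le_max_left _ _) (by positivity)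
    · rw [Real.rpow_zero, mul_one]; exact hη.2.le.trans (le_max_right _ _)
  · refine ae_of_all _ fun y => ?_
    have hc : Continuous (fun η : ℝ => min (H * ‖y‖ ^ p) η * ‖y‖ ^ (-(d:ℝ) - σ)) := by fun_prop
    have := hc.tendsto 0
    have h1 : min (H * ‖y‖ ^ p) 0 = 0 := min_eq_right (by positivity)
    simp only [h1, zero_mul] at this
    exact this.mono_left nhdsWithin_le_nhds

lemma integrable_delta {d : ℕ} (hd : 1 ≤ d) {σ p H B : ℝ} (hσ : 0 < σ) (hp : σ < p) (hH : 0 ≤ H)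
    {u : EuclideanSpace ℝ (Fin d) → ℝ} (hu : Measurable u) (hB : ∀ x, |u x| ≤ B)
    (hHol : ∀ x y, |u x - u y| ≤ H * ‖x - y‖ ^ p) (x : EuclideanSpace ℝ (Fin d)) :
    Integrable (fun y => (u (x + y) - u x) * ‖y‖ ^ (-(d:ℝ) - σ)) := by
  have hintg := integrable_min_kernel hd (σ := σ) (p := p) (q := 0) hp hσ
  refine Integrable.mono' (hintg.const_mul (H + 2 * B)) ?_ ?_
  · apply Measurable.aestronglyMeasurable
    fun_prop
  · refine ae_of_all _ fun y => ?_
    have hB0 : 0 ≤ B := (abs_nonneg _).trans (hB x)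
    rw [norm_mul, Real.norm_of_nonneg (by positivity : 0 ≤ ‖y‖ ^ (-(d:ℝ) - σ)), ← mul_assoc]
    apply mul_le_mul_of_nonneg_right _ (by positivity)
    have h1 : |u (x + y) - u x| ≤ H * ‖y‖ ^ p := by simpa using hHol (x + y) x
    have h2 : |u (x + y) - u x| ≤ 2 * B := by
      have := abs_sub (u (x + y)) (u x)
      linarith [hB (x + y), hB x]
    rw [mul_min_of_nonneg _ _ (by positivity), Real.norm_eq_abs]
    have h3 : 0 ≤ ‖y‖ ^ p := by positivity
    apply le_min
    · nlinarith
    · rw [Real.rpow_zero]; linarith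

/-- reflection swapping `w` and `-w`. -/
lemma exists_reflection {d : ℕ} (w : EuclideanSpace ℝ (Fin d)) (hw : w ≠ 0) :
    ∃ R : EuclideanSpace ℝ (Fin d) ≃ₗᵢ[ℝ] EuclideanSpace ℝ (Fin d),
      (∀ y, R (R y) = y) ∧ (∀ y, R y = y - (2 * (inner ℝ w y / ‖w‖ ^ 2)) • w) ∧
      (∀ y, inner ℝ w (R y) = - inner ℝ w y) := by
  have hw2 : ‖w‖ ^ 2 ≠ 0 := by positivity
  have hR : ∀ y, (ℝ ∙ w)ᗮ.reflection y = y - (2 * (inner ℝ w y / ‖w‖ ^ 2)) • w := by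
    intro y
    rw [Submodule.reflection_orthogonal_apply, Submodule.reflection_singleton_apply]
    simp only [RCLike.ofReal_real_eq_id, id]
    rw [mul_smul, two_smul, two_smul]; abel
  refine ⟨(ℝ ∙ w)ᗮ.reflection, fun y => Submodule.reflection_reflection _ y, hR, ?_⟩
  intro y
  rw [hR, inner_sub_right, inner_smul_right, real_inner_self_eq_norm_sq]
  field_simp
  ring

set_option maxHeartbeats 1000000 in
lemma contact {d : ℕ} (hd : 1 ≤ d) {σ p lam Lam B H M0 η c W J : ℝ} (hσ : 0 < σ) (hp : σ < p)
    (hH : 0 ≤ H) (hlam : 0 < lam) (hη : 0 < η) (hW : 0 ≤ W)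
    {u : EuclideanSpace ℝ (Fin d) → ℝ} (hu : Measurable u) (hB : ∀ x, |u x| ≤ B)
    (hHol : ∀ x y, |u x - u y| ≤ H * ‖x - y‖ ^ p)
    {a1 a2 : EuclideanSpace ℝ (Fin d) → ℝ} (ha1 : Measurable a1) (ha2 : Measurable a2)
    (h1 : ∀ y, a1 y ∈ Set.Icc lam Lam) (h2 : ∀ y, a2 y ∈ Set.Icc lam Lam)
    (h12 : ∀ y, |a1 y - a2 y| ≤ W)
    {φ : ℝ → ℝ} (hφ : ∀ x y, x ≠ y → u x - u y ≤ M0 * φ ‖x - y‖) (hM0 : 0 ≤ M0)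
    {x z : EuclideanSpace ℝ (Fin d)} (hxz : x ≠ z)
    (hsd : ∀ t, ‖x - z‖ / 4 ≤ t → t ≤ ‖x - z‖ / 2 →
      φ (‖x - z‖ + t) + φ (‖x - z‖ - t) ≤ (2 - c) * φ ‖x - z‖)
    (hcon : M0 * φ ‖x - z‖ - η ≤ u x - u z)
    (hηs : η ≤ c * M0 * φ ‖x - z‖ / 4)
    (hJ : ∫ y, |u (z + y) - u z| * ‖y‖ ^ (-(d:ℝ) - σ) ≤ J) :
    (∫ y, (u (x + y) - u x) * a1 y * ‖y‖ ^ (-(d:ℝ) - σ)) -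
      (∫ y, (u (z + y) - u z) * a2 y * ‖y‖ ^ (-(d:ℝ) - σ)) ≤
      - (lam * c * M0 * φ ‖x - z‖ / 4 *
        ((1/16) ^ d * volume.real (ball (0 : EuclideanSpace ℝ (Fin d)) 1) * ‖x - z‖ ^ (-σ)))
      + Lam * (∫ y : EuclideanSpace ℝ (Fin d),
          min ((2 * H) * ‖y‖ ^ p) η * ‖y‖ ^ (-(d:ℝ) - σ)) + W * J := by
  have hne : Nonempty (Fin d) := ⟨⟨0, hd⟩⟩
  have hfr : Module.finrank ℝ (EuclideanSpace ℝ (Fin d)) = d := by simp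
  set r := ‖x - z‖ with hr
  have hr0 : 0 < r := norm_pos_iff.2 (sub_ne_zero.2 hxz)
  set w := x - z with hw
  have hw0 : w ≠ 0 := sub_ne_zero.2 hxz
  obtain ⟨R, hRR, hR, hRin⟩ := exists_reflection w hw0
  set k : EuclideanSpace ℝ (Fin d) → ℝ := fun y => ‖y‖ ^ (-(d:ℝ) - σ) with hk
  have hk0 : ∀ y, 0 ≤ k y := fun y => by simp only [hk]; positivity
  have hkm : Measurable k := by simp only [hk]; fun_prop
  set P : EuclideanSpace ℝ (Fin d) → ℝ := fun y => u (x + y) - u x with hP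
  set Q : EuclideanSpace ℝ (Fin d) → ℝ := fun y => u (z + y) - u z with hQ
  have hPk : Integrable (fun y => P y * k y) := integrable_delta hd hσ hp hH hu hB hHol x
  have hQk : Integrable (fun y => Q y * k y) := integrable_delta hd hσ hp hH hu hB hHol z
  set m : EuclideanSpace ℝ (Fin d) → ℝ := fun y => inner ℝ w y / r ^ 2 with hm
  have hmm : Measurable m := by simp only [hm]; fun_prop
  set D : Set (EuclideanSpace ℝ (Fin d)) := {y | ‖y‖ ≤ r / 4 ∧ 1 / 8 ≤ |m y|} with hD
  have hDm : MeasurableSet D := by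
    apply MeasurableSet.inter
    · exact measurableSet_le measurable_norm measurable_const
    · exact measurableSet_le measurable_const (by simpa using hmm.abs)
  have hmR : ∀ y, m (R y) = - m y := by intro y; simp only [hm, hRin]; ring
  have hDR : ∀ y, R y ∈ D ↔ y ∈ D := by
    intro y; simp only [hD, Set.mem_ofPred_eq, hmR, abs_neg, LinearIsometryEquiv.norm_map]
  set χ : EuclideanSpace ℝ (Fin d) → ℝ := D.indicator (fun _ => 1) with hχ
  have hχm : Measurable χ := measurable_const.indicator hDm
  have hχ01 : ∀ y, χ y = 0 ∨ χ y = 1 := by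
    intro y; by_cases hy : y ∈ D
    · right; simp [hχ, hy]
    · left; simp [hχ, hy]
  have hχR : ∀ y, χ (R y) = χ y := by
    intro y
    by_cases hy : y ∈ D
    · have := (hDR y).2 hy
      simp [hχ, hy, this]
    · have : R y ∉ D := fun h => hy ((hDR y).1 h)
      simp [hχ, hy, this]
  have hkR : ∀ y, k (R y) = k y := by intro y; simp only [hk, LinearIsometryEquiv.norm_map]
  have hχb : ∀ y, ‖χ y‖ ≤ 1 := by
    intro y; rcases hχ01 y with h | h <;> rw [h] <;> simp
  have hmb : ∀ y, |m y| ≤ ‖y‖ / r := by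
    intro y
    simp only [hm]
    rw [abs_div, abs_of_nonneg (by positivity : 0 ≤ r ^ 2), div_le_div_iff₀ (by positivity) hr0]
    have := abs_real_inner_le_norm w y
    have h3 : |inner ℝ w y| ≤ r * ‖y‖ := this
    nlinarith
  -- decomposition
  have i1 : Integrable (fun y => χ y * (P y * k y)) :=
    hPk.bdd_mul (c := 1) hχm.aestronglyMeasurable (ae_of_all _ hχb)
  have i2 : Integrable (fun y => χ y * (Q y * k y)) :=
    hQk.bdd_mul (c := 1) hχm.aestronglyMeasurable (ae_of_all _ hχb)
  have hab1 : ∀ y, ‖a1 y‖ ≤ Lam := fun y => by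
    rw [Real.norm_of_nonneg (hlam.le.trans (h1 y).1)]; exact (h1 y).2
  have hab2 : ∀ y, ‖a2 y‖ ≤ Lam := fun y => by
    rw [Real.norm_of_nonneg (hlam.le.trans (h2 y).1)]; exact (h2 y).2
  have i3 : Integrable (fun y => a1 y * (P y * k y)) :=
    hPk.bdd_mul (c := Lam) ha1.aestronglyMeasurable (ae_of_all _ hab1)
  have i4 : Integrable (fun y => a1 y * (Q y * k y)) :=
    hQk.bdd_mul (c := Lam) ha1.aestronglyMeasurable (ae_of_all _ hab1)
  have i5 : Integrable (fun y => a2 y * (Q y * k y)) :=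
    hQk.bdd_mul (c := Lam) ha2.aestronglyMeasurable (ae_of_all _ hab2)
  have e0 : (∫ y, P y * a1 y * k y) - (∫ y, Q y * a2 y * k y) =
      lam * ((∫ y, χ y * (P y * k y)) - ∫ y, χ y * (Q y * k y)) +
      (∫ y, (a1 y * (P y * k y) - a1 y * (Q y * k y) -
        lam * (χ y * (P y * k y) - χ y * (Q y * k y)))) +
      ∫ y, (a1 y * (Q y * k y) - a2 y * (Q y * k y)) := by
    have j1 : ∀ y, P y * a1 y * k y = a1 y * (P y * k y) := fun y => by ring
    have j2 : ∀ y, Q y * a2 y * k y = a2 y * (Q y * k y) := fun y => by ring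
    simp_rw [j1, j2]
    have i34 : Integrable (fun y => a1 y * (P y * k y) - a1 y * (Q y * k y)) := i3.sub i4
    have i12 : Integrable (fun y => χ y * (P y * k y) - χ y * (Q y * k y)) := i1.sub i2
    rw [integral_sub i34 (i12.const_mul lam), integral_const_mul,
      integral_sub i3 i4, integral_sub i1 i2, integral_sub i4 i5]
    ring
  -- second term
  have t2 : (∫ y, (a1 y * (P y * k y) - a1 y * (Q y * k y) -
        lam * (χ y * (P y * k y) - χ y * (Q y * k y)))) ≤
      Lam * (∫ y : EuclideanSpace ℝ (Fin d), min ((2 * H) * ‖y‖ ^ p) η * k y) := by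
    rw [← integral_const_mul]
    have hintg := integrable_min_kernel hd (σ := σ) (p := p) (q := 0) hp hσ
    have hig : Integrable (fun y : EuclideanSpace ℝ (Fin d) => min ((2 * H) * ‖y‖ ^ p) η * k y) := by
      refine Integrable.mono' (hintg.const_mul (2 * H + η)) ?_ ?_
      · apply Measurable.aestronglyMeasurable
        fun_prop
      · refine ae_of_all _ fun y => ?_
        have := hk0 y
        rw [Real.norm_of_nonneg (mul_nonneg (by positivity) this), ← mul_assoc]
        apply mul_le_mul_of_nonneg_right _ (by positivity)
        rw [mul_min_of_nonneg _ _ (by positivity)]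
        have h3 : 0 ≤ ‖y‖ ^ p := by positivity
        apply min_le_min
        · nlinarith
        · rw [Real.rpow_zero]; linarith
    apply integral_mono ((i3.sub i4).sub ((i1.sub i2).const_mul lam)) (hig.const_mul Lam)
    intro y
    change a1 y * (P y * k y) - a1 y * (Q y * k y) -
        lam * (χ y * (P y * k y) - χ y * (Q y * k y)) ≤ Lam * (min ((2 * H) * ‖y‖ ^ p) η * k y)
    have hb : P y - Q y ≤ min ((2 * H) * ‖y‖ ^ p) η := by
      apply le_min
      · have q1 : |u (x + y) - u x| ≤ H * ‖y‖ ^ p := by simpa using hHol (x + y) x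
        have q2 : |u (z + y) - u z| ≤ H * ‖y‖ ^ p := by simpa using hHol (z + y) z
        simp only [hP, hQ]
        linarith [(abs_le.1 q1).2, (abs_le.1 q2).1]
      · have q := hφ (x + y) (z + y) (by simpa using hxz)
        have : x + y - (z + y) = w := by rw [hw]; abel
        rw [this] at q
        simp only [hP, hQ]
        linarith
    have hmin0 : 0 ≤ min ((2 * H) * ‖y‖ ^ p) η := by positivity
    have hc0 : 0 ≤ a1 y - lam * χ y := by
      rcases hχ01 y with h | h <;> rw [h] <;> linarith [(h1 y).1]
    have hc1 : a1 y - lam * χ y ≤ Lam := by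
      rcases hχ01 y with h | h <;> rw [h] <;> linarith [(h1 y).2]
    calc a1 y * (P y * k y) - a1 y * (Q y * k y) -
        lam * (χ y * (P y * k y) - χ y * (Q y * k y))
        = (a1 y - lam * χ y) * (P y - Q y) * k y := by ring
      _ ≤ (Lam * min ((2 * H) * ‖y‖ ^ p) η) * k y := by
        apply mul_le_mul_of_nonneg_right _ (hk0 y)
        exact (mul_le_mul_of_nonneg_left hb hc0).trans (mul_le_mul_of_nonneg_right hc1 hmin0)
      _ = _ := by ring
  -- third term
  have t3 : ∫ y, (a1 y * (Q y * k y) - a2 y * (Q y * k y)) ≤ W * J := by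
    have iQ : Integrable (fun y => |Q y| * k y) := by
      have := hQk.norm
      refine this.congr (ae_of_all _ fun y => ?_)
      simp only [norm_mul, Real.norm_eq_abs, abs_of_nonneg (hk0 y)]
    calc ∫ y, (a1 y * (Q y * k y) - a2 y * (Q y * k y)) ≤ ∫ y, W * (|Q y| * k y) := by
          apply integral_mono (i4.sub i5) (iQ.const_mul W)
          intro y
          change a1 y * (Q y * k y) - a2 y * (Q y * k y) ≤ W * (|Q y| * k y)
          have : (a1 y - a2 y) * Q y ≤ W * |Q y| := by
            refine (le_abs_self _).trans ?_
            rw [abs_mul]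
            exact mul_le_mul_of_nonneg_right (h12 y) (abs_nonneg _)
          linarith [mul_le_mul_of_nonneg_right this (hk0 y)]
      _ = W * ∫ y, |Q y| * k y := integral_const_mul _ _
      _ ≤ W * J := mul_le_mul_of_nonneg_left hJ hW
  -- first term
  have hsymm : ∀ F : EuclideanSpace ℝ (Fin d) → ℝ,
      ∫ y, χ y * (F y * k y) = ∫ y, χ y * (F (R y) * k y) := by
    intro F
    rw [← (R.measurePreserving).integral_comp R.toHomeomorph.measurableEmbedding]
    simp only [hχR, hkR]
  have icomp : ∀ F : EuclideanSpace ℝ (Fin d) → ℝ, Integrable (fun y => χ y * (F y * k y)) →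
      Integrable (fun y => χ y * (F (R y) * k y)) := by
    intro F hF
    have := ((R.measurePreserving).integrable_comp_emb R.toHomeomorph.measurableEmbedding).2 hF
    refine this.congr (ae_of_all _ fun y => ?_)
    simp only [Function.comp, hχR, hkR]
  have hyD : ∀ y ∈ D, r / 8 ≤ ‖y‖ := by
    intro y hy
    have := hy.2.trans (hmb y)
    rw [le_div_iff₀ hr0] at this
    linarith
  have iχk : Integrable (fun y => χ y * k y) := by
    have hintg := integrable_min_kernel hd (σ := σ) (p := p) (q := 0) hp hσ
    have hpos : 0 < min ((r / 8) ^ p) 1 := by positivity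
    refine Integrable.mono' (hintg.const_mul (min ((r / 8) ^ p) 1)⁻¹)
      (hχm.mul hkm).aestronglyMeasurable ?_
    refine ae_of_all _ fun y => ?_
    rw [norm_mul, Real.norm_of_nonneg (hk0 y), ← mul_assoc]
    apply mul_le_mul_of_nonneg_right _ (hk0 y)
    by_cases hy : y ∈ D
    · refine (hχb y).trans ?_
      rw [← div_eq_inv_mul, le_div_iff₀ hpos, one_mul, Real.rpow_zero]
      exact min_le_min (Real.rpow_le_rpow (by positivity) (hyD y hy) (by linarith)) le_rfl
    · have : χ y = 0 := by simp [hχ, hy]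
      rw [this, norm_zero]; positivity
  have t1 : (∫ y, χ y * (P y * k y)) - ∫ y, χ y * (Q y * k y) ≤
      (- (c * M0 * φ r) / 2 + η) * ∫ y, χ y * k y := by
    have e1 : (∫ y, χ y * (P y * k y)) - ∫ y, χ y * (Q y * k y) =
        ∫ y, (1/2) * ((χ y * (P y * k y) + χ y * (P (R y) * k y)) -
          (χ y * (Q y * k y) + χ y * (Q (R y) * k y))) := by
      have iP : Integrable (fun y => χ y * (P y * k y) + χ y * (P (R y) * k y)) :=
        i1.add (icomp P i1)
      have iQ : Integrable (fun y => χ y * (Q y * k y) + χ y * (Q (R y) * k y)) :=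
        i2.add (icomp Q i2)
      rw [integral_const_mul, integral_sub iP iQ,
        integral_add i1 (icomp P i1), integral_add i2 (icomp Q i2), ← hsymm P, ← hsymm Q]
      ring
    rw [e1, ← integral_const_mul]
    apply integral_mono (((i1.add (icomp P i1)).sub (i2.add (icomp Q i2))).const_mul _)
      (iχk.const_mul _)
    intro y
    change (1/2) * ((χ y * (P y * k y) + χ y * (P (R y) * k y)) -
          (χ y * (Q y * k y) + χ y * (Q (R y) * k y))) ≤
          (- (c * M0 * φ r) / 2 + η) * (χ y * k y)
    by_cases hy : y ∈ D
    · have hχ1 : χ y = 1 := by simp [hχ, hy]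
      rw [hχ1]
      have hnorm : ∀ y ∈ D, ‖x + y - (z + R y)‖ = r + 2 * m y * r ∧ x + y ≠ z + R y := by
        intro y hy
        have q0 : x + y - (z + R y) = (1 + 2 * m y) • w := by
          rw [hR, add_smul, one_smul, hw]
          change x + y - (z + (y - (2 * m y) • (x - z))) = x - z + (2 * m y) • (x - z)
          abel
        have q1 : |m y| ≤ 1 / 4 := by
          refine (hmb y).trans ?_
          rw [div_le_iff₀ hr0]; linarith [hy.1]
        have q2 : 0 < 1 + 2 * m y := by linarith [(abs_le.1 q1).1]
        have q3 : ‖x + y - (z + R y)‖ = r + 2 * m y * r := by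
          rw [q0, norm_smul, Real.norm_of_nonneg q2.le]
          change (1 + 2 * m y) * r = _
          ring
        refine ⟨q3, fun h => ?_⟩
        rw [h, sub_self, norm_zero] at q3
        nlinarith
      have n1 := hnorm y hy
      have n2 := hnorm (R y) ((hDR y).2 hy)
      have b1 := hφ _ _ n1.2
      have b2 := hφ _ _ n2.2
      rw [n1.1] at b1
      rw [n2.1, hRR, hmR] at b2
      rw [hRR] at n2
      have q1 : |m y| ≤ 1 / 4 := by
        refine (hmb y).trans ?_
        rw [div_le_iff₀ hr0]; linarith [hy.1]
      have hs : φ (r + 2 * m y * r) + φ (r + 2 * -m y * r) ≤ (2 - c) * φ r := by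
        have hq := hsd (2 * |m y| * r) (by nlinarith [hy.2]) (by nlinarith)
        rcases abs_cases (m y) with ⟨h, _⟩ | ⟨h, _⟩
        · rw [h] at hq
          have : r + 2 * -m y * r = r - 2 * m y * r := by ring
          rw [this]; exact hq
        · rw [h] at hq
          have : r + 2 * m y * r = r - 2 * -m y * r := by ring
          rw [this, add_comm]; exact hq
      have hs' := mul_le_mul_of_nonneg_left hs hM0
      have hfin : (1/2) * ((P y + P (R y)) - (Q y + Q (R y))) ≤ - (c * M0 * φ r) / 2 + η := by
        simp only [hP, hQ]
        linarith
      have hfin2 := mul_le_mul_of_nonneg_right hfin (hk0 y)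
      linarith
    · have hχ1 : χ y = 0 := by simp [hχ, hy]
      rw [hχ1]; simp
  -- lower bound
  have hlow : (1/16) ^ d * volume.real (ball (0 : EuclideanSpace ℝ (Fin d)) 1) * r ^ (-σ) ≤
      ∫ y, χ y * k y := by
    set b := ball ((3/16 : ℝ) • w) (r / 16) with hb
    have hbD : b ⊆ D := by
      intro y hy
      rw [hb, mem_ball, dist_eq_norm] at hy
      have hyd : y = (3/16 : ℝ) • w + (y - (3/16 : ℝ) • w) := by abel
      have hnw : ‖(3/16 : ℝ) • w‖ = 3/16 * r := by
        rw [norm_smul, Real.norm_of_nonneg (by norm_num)]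
      constructor
      · rw [hyd]
        refine (norm_add_le _ _).trans ?_
        rw [hnw]; linarith
      · refine le_trans ?_ (le_abs_self _)
        simp only [hm]
        rw [le_div_iff₀ (by positivity), hyd, inner_add_right, inner_smul_right,
          real_inner_self_eq_norm_sq]
        have q := abs_real_inner_le_norm w (y - (3/16 : ℝ) • w)
        have q' := (abs_le.1 q).1
        have q'' : ‖w‖ * ‖y - (3/16 : ℝ) • w‖ ≤ r * (r / 16) :=
          mul_le_mul_of_nonneg_left hy.le hr0.le
        change 1 / 8 * r ^ 2 ≤ 3/16 * r ^ 2 + _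
        nlinarith
    have hvol : volume.real b = (r / 16) ^ d * volume.real (ball (0 : EuclideanSpace ℝ (Fin d)) 1) := by
      rw [measureReal_def, hb, Measure.addHaar_ball _ _ (by positivity), hfr, ENNReal.toReal_mul,
        ENNReal.toReal_ofReal (by positivity), measureReal_def]
    have hbm : MeasurableSet b := measurableSet_ball
    calc (1/16) ^ d * volume.real (ball (0 : EuclideanSpace ℝ (Fin d)) 1) * r ^ (-σ)
        = volume.real b * r ^ (-(d:ℝ) - σ) := by
          rw [hvol, div_pow, div_pow, one_pow, sub_eq_add_neg, Real.rpow_add hr0, Real.rpow_neg hr0.le (d:ℝ),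
            Real.rpow_natCast]
          field_simp
      _ = ∫ y, b.indicator (fun _ => r ^ (-(d:ℝ) - σ)) y := by
          rw [integral_indicator hbm, setIntegral_const, smul_eq_mul]
      _ ≤ ∫ y, χ y * k y := by
          apply integral_mono _ iχk
          · intro y
            by_cases hy : y ∈ b
            · have hyD' := hbD hy
              have hχ1 : χ y = 1 := by simp [hχ, hyD']
              simp only [Set.indicator_of_mem hy, hχ1, one_mul, hk]
              apply Real.rpow_le_rpow_of_nonpos
              · have := hyD y hyD'; linarith
              · linarith [hyD'.1]
              · have : (0:ℝ) ≤ d := Nat.cast_nonneg d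
                linarith
            · simp only [Set.indicator_of_notMem hy]
              exact mul_nonneg (by rcases hχ01 y with h | h <;> rw [h] <;> norm_num) (hk0 y)
          · rw [integrable_indicator_iff hbm]
            exact integrableOn_const (by rw [hb]; exact measure_ball_lt_top.ne)
  change (∫ y, P y * a1 y * k y) - (∫ y, Q y * a2 y * k y) ≤ _
  rw [e0]
  have t1' : lam * ((∫ y, χ y * (P y * k y)) - ∫ y, χ y * (Q y * k y)) ≤
      - (lam * c * M0 * φ r / 4 *
        ((1/16) ^ d * volume.real (ball (0 : EuclideanSpace ℝ (Fin d)) 1) * r ^ (-σ))) := by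
    have g0 : 0 ≤ ∫ y, χ y * k y := integral_nonneg fun y =>
      mul_nonneg (by rcases hχ01 y with h | h <;> rw [h] <;> norm_num) (hk0 y)
    have g1 : 0 ≤ c * M0 * φ r / 4 := hη.le.trans hηs
    have g2 : (- (c * M0 * φ r) / 2 + η) * ∫ y, χ y * k y ≤ - (c * M0 * φ r / 4) * ∫ y, χ y * k y :=
      mul_le_mul_of_nonneg_right (by linarith) g0
    have g3 := mul_le_mul_of_nonneg_left hlow g1
    have g4 := mul_le_mul_of_nonneg_left (t1.trans g2) hlam.le
    have g5 := mul_le_mul_of_nonneg_left g3 hlam.le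
    refine g4.trans ?_
    linarith
  linarith


lemma dini_summable {ω : ℝ → ℝ} (h : IsDini ω) : Summable (fun k : ℕ => ω ((1/2) ^ (k + 1))) := by
  obtain ⟨h0, hmono, hintg⟩ := h
  have claim : ∀ n : ℕ, ∑ k ∈ Finset.range n, ω ((1/2) ^ (k + 1)) / 2 ≤
      ∫ r in Set.Ioc ((1/2:ℝ) ^ n) 1, ω r / r := by
    intro n
    induction n with
    | zero => simp
    | succ n ih =>
      have ha : (1/2:ℝ) ^ (n + 1) ≤ (1/2) ^ n := pow_le_pow_of_le_one (by norm_num) (by norm_num) (by omega)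
      have hb : (1/2:ℝ) ^ n ≤ 1 := pow_le_one₀ (by norm_num) (by norm_num)
      have hpos : (0:ℝ) < (1/2) ^ (n + 1) := by positivity
      have hI1 : IntegrableOn (fun r => ω r / r) (Set.Ioc ((1/2:ℝ) ^ (n + 1)) ((1/2) ^ n)) :=
        hintg.mono_set (Set.Ioc_subset_Ioc hpos.le hb)
      have hI2 : IntegrableOn (fun r => ω r / r) (Set.Ioc ((1/2:ℝ) ^ n) 1) :=
        hintg.mono_set (Set.Ioc_subset_Ioc (by positivity) le_rfl)
      rw [Finset.sum_range_succ, ← Set.Ioc_union_Ioc_eq_Ioc ha hb,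
        setIntegral_union (Set.Ioc_disjoint_Ioc_of_le le_rfl) measurableSet_Ioc hI1 hI2, add_comm]
      apply add_le_add _ ih
      have : ∫ r in Set.Ioc ((1/2:ℝ) ^ (n + 1)) ((1/2) ^ n), ω ((1/2) ^ (n + 1)) / (1/2) ^ n ≤
          ∫ r in Set.Ioc ((1/2:ℝ) ^ (n + 1)) ((1/2) ^ n), ω r / r := by
        apply setIntegral_mono_on (integrableOn_const (by simp)) hI1 measurableSet_Ioc
        intro r hr
        have hr0 : 0 < r := hpos.trans hr.1
        exact div_le_div₀ (h0 r hr0) (hmono hpos hr0 hr.1.le) hr0 hr.2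
      refine le_trans (le_of_eq ?_) this
      rw [setIntegral_const, measureReal_def, Real.volume_Ioc, ENNReal.toReal_ofReal (by linarith), smul_eq_mul]
      have : (1/2:ℝ) ^ n ≠ 0 := by positivity
      field_simp
      ring
  refine summable_of_sum_range_le (c := 2 * ∫ r in Set.Ioc (0:ℝ) 1, ω r / r)
    (fun n => h0 _ (by positivity)) fun n => ?_
  have h1 := claim n
  rw [← Finset.sum_div] at h1
  have h2 : ∫ r in Set.Ioc ((1/2:ℝ) ^ n) 1, ω r / r ≤ ∫ r in Set.Ioc (0:ℝ) 1, ω r / r := by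
    apply setIntegral_mono_set hintg
    · filter_upwards [ae_restrict_mem measurableSet_Ioc] with r hr
      exact div_nonneg (h0 r hr.1) hr.1.le
    · exact (Set.Ioc_subset_Ioc (by positivity) le_rfl).eventuallyLE
  linarith

/-- the modulus of continuity. -/
def phi (σ κ : ℝ) (b τ : ℕ → ℝ) (r : ℝ) : ℝ := ∑' n, b n * gfun σ κ (τ n) r

section phi
variable {σ κ : ℝ} {b τ : ℕ → ℝ}

lemma phi_summable (hκ : 0 < κ) (hb : ∀ n, 0 ≤ b n) (hs : Summable b) (hτ : ∀ n, 0 < τ n) {r : ℝ}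
    (hr : 0 < r) : Summable (fun n => b n * gfun σ κ (τ n) r) :=
  Summable.of_nonneg_of_le (fun n => mul_nonneg (hb n) (gfun_nonneg (hτ n) hr.le))
    (fun n => mul_le_mul_of_nonneg_left (gfun_le hκ (hτ n) hr) (hb n)) (hs.mul_right (r ^ σ))

lemma phi_le (hκ : 0 < κ) (hb : ∀ n, 0 ≤ b n) (hs : Summable b) (hτ : ∀ n, 0 < τ n) {r : ℝ}
    (hr : 0 < r) : phi σ κ b τ r ≤ (∑' n, b n) * r ^ σ := by
  unfold phi
  rw [← tsum_mul_right]
  exact (phi_summable hκ hb hs hτ hr).tsum_le_tsum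
    (fun n => mul_le_mul_of_nonneg_left (gfun_le hκ (hτ n) hr) (hb n)) (hs.mul_right (r ^ σ))

lemma phi_mono (hκ : 0 < κ) (hκσ : κ < σ) (hb : ∀ n, 0 ≤ b n) (hs : Summable b)
    (hτ : ∀ n, 0 < τ n) {r r' : ℝ} (hr : 0 < r) (h : r ≤ r') :
    phi σ κ b τ r ≤ phi σ κ b τ r' :=
  (phi_summable hκ hb hs hτ hr).tsum_le_tsum
    (fun n => mul_le_mul_of_nonneg_left (gfun_mono hκ hκσ (hτ n) hr.le h) (hb n))
    (phi_summable hκ hb hs hτ (hr.trans_le h))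

lemma phi_lower (hκ : 0 < κ) (hκ1 : κ ≤ 1) (hb : ∀ n, 0 ≤ b n) (hs : Summable b)
    (hτ : ∀ n, 0 < τ n) {r : ℝ} (hr : 0 < r) (n : ℕ) (h1 : τ n / 2 ≤ r) (h2 : r ≤ τ n) :
    b n * (r ^ σ / 2) ≤ phi σ κ b τ r :=
  (mul_le_mul_of_nonneg_left (gfun_lower hκ hκ1 hr h1 h2) (hb n)).trans
    ((phi_summable hκ hb hs hτ hr).le_tsum n
      fun m _ => mul_nonneg (hb m) (gfun_nonneg (hτ m) hr.le))

lemma phi_second_diff {c : ℝ} (hκ : 0 < κ) (hb : ∀ n, 0 ≤ b n) (hs : Summable b)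
    (hτ : ∀ n, 0 < τ n)
    (hc : ∀ τ r t : ℝ, 0 < τ → 0 < r → r / 4 ≤ t → t ≤ r / 2 →
      gfun σ κ τ (r + t) + gfun σ κ τ (r - t) ≤ (2 - c) * gfun σ κ τ r)
    {r t : ℝ} (hr : 0 < r) (h1 : r / 4 ≤ t) (h2 : t ≤ r / 2) :
    phi σ κ b τ (r + t) + phi σ κ b τ (r - t) ≤ (2 - c) * phi σ κ b τ r := by
  have s1 := phi_summable (σ := σ) hκ hb hs hτ (by linarith : 0 < r + t)
  have s2 := phi_summable (σ := σ) hκ hb hs hτ (by linarith : 0 < r - t)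
  have s3 := phi_summable (σ := σ) hκ hb hs hτ hr
  unfold phi
  rw [← s1.tsum_add s2, ← tsum_mul_left]
  refine (s1.add s2).tsum_le_tsum (fun n => ?_) (s3.mul_left _)
  have := mul_le_mul_of_nonneg_left (hc (τ n) r t (hτ n) hr h1 h2) (hb n)
  linarith

lemma phi_integral {d : ℕ} {C M0 : ℝ} (hκ : 0 < κ) (hb : ∀ n, 0 ≤ b n) (hs : Summable b)
    (hτ : ∀ n, 0 < τ n) (hC0 : 0 ≤ C) (hM0 : 0 ≤ M0)
    (hC : ∀ τ : ℝ, 0 < τ →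
      ∫⁻ y : EuclideanSpace ℝ (Fin d), ENNReal.ofReal (gfun σ κ τ ‖y‖ * ‖y‖ ^ (-(d:ℝ) - σ))
        ≤ ENNReal.ofReal C)
    {Q : EuclideanSpace ℝ (Fin d) → ℝ} (hQ : ∀ y, y ≠ 0 → |Q y| ≤ M0 * phi σ κ b τ ‖y‖)
    (hQ0 : Q 0 = 0)
    (hintg : Integrable (fun y => Q y * ‖y‖ ^ (-(d:ℝ) - σ))) :
    ∫ y, |Q y| * ‖y‖ ^ (-(d:ℝ) - σ) ≤ M0 * (C * ∑' n, b n) := by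
  have i1 : Integrable (fun y => |Q y| * ‖y‖ ^ (-(d:ℝ) - σ)) := by
    refine hintg.norm.congr (ae_of_all _ fun y => ?_)
    have : 0 ≤ ‖y‖ ^ (-(d:ℝ) - σ) := by positivity
    simp only [norm_mul, Real.norm_eq_abs, abs_of_nonneg this]
  have hts : 0 ≤ ∑' n, b n := tsum_nonneg hb
  rw [← ENNReal.ofReal_le_ofReal_iff (by positivity),
    ofReal_integral_eq_lintegral_ofReal i1 (ae_of_all _ fun y => by positivity)]
  have hpt : ∀ y : EuclideanSpace ℝ (Fin d), ENNReal.ofReal (|Q y| * ‖y‖ ^ (-(d:ℝ) - σ)) ≤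
      ∑' n, ENNReal.ofReal (M0 * b n) *
        ENNReal.ofReal (gfun σ κ (τ n) ‖y‖ * ‖y‖ ^ (-(d:ℝ) - σ)) := by
    intro y
    by_cases hy : y = 0
    · subst hy; simp [hQ0]
    have hy' : 0 < ‖y‖ := norm_pos_iff.2 hy
    have hsum := ((phi_summable (σ := σ) hκ hb hs hτ hy').mul_left M0).mul_right (‖y‖ ^ (-(d:ℝ) - σ))
    have e : ∀ n, ENNReal.ofReal (M0 * b n) *
        ENNReal.ofReal (gfun σ κ (τ n) ‖y‖ * ‖y‖ ^ (-(d:ℝ) - σ)) =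
        ENNReal.ofReal (M0 * (b n * gfun σ κ (τ n) ‖y‖) * ‖y‖ ^ (-(d:ℝ) - σ)) := by
      intro n
      rw [← ENNReal.ofReal_mul (mul_nonneg hM0 (hb n))]
      congr 1; ring
    simp_rw [e]
    rw [← ENNReal.ofReal_tsum_of_nonneg _ hsum]
    · apply ENNReal.ofReal_le_ofReal
      rw [tsum_mul_right, tsum_mul_left]
      exact mul_le_mul_of_nonneg_right (hQ y hy) (by positivity)
    · intro n
      have := gfun_nonneg (σ := σ) (κ := κ) (hτ n) hy'.le
      have := hb n
      positivity
  refine (lintegral_mono hpt).trans ?_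
  rw [lintegral_tsum]
  · calc ∑' n, ∫⁻ y : EuclideanSpace ℝ (Fin d), ENNReal.ofReal (M0 * b n) *
        ENNReal.ofReal (gfun σ κ (τ n) ‖y‖ * ‖y‖ ^ (-(d:ℝ) - σ))
        ≤ ∑' n, ENNReal.ofReal (M0 * b n) * ENNReal.ofReal C := by
          refine ENNReal.tsum_le_tsum fun n => ?_
          rw [lintegral_const_mul' _ _ ENNReal.ofReal_ne_top]
          gcongr
          exact hC _ (hτ n)
      _ = ∑' n, ENNReal.ofReal (M0 * C * b n) := by
          congr 1; ext n
          rw [← ENNReal.ofReal_mul (mul_nonneg hM0 (hb n))]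
          congr 1; ring
      _ = ENNReal.ofReal (M0 * (C * ∑' n, b n)) := by
          rw [← ENNReal.ofReal_tsum_of_nonneg _ (hs.mul_left _), tsum_mul_left, mul_assoc]
          intro n; have := hb n; positivity
      _ ≤ _ := le_rfl
  · intro n
    apply Measurable.aemeasurable
    unfold gfun
    fun_prop
end phi


set_option maxHeartbeats 1000000 in
lemma core_estimate (d : ℕ) (hd : 1 ≤ d) (σ lam Lam : ℝ)
    (hσ : σ ∈ Set.Ioo (0:ℝ) 1) (hlam : 0 < lam) (hlamLam : lam ≤ Lam)
    (ωa : ℝ → ℝ) (hωa : IsDini ωa) :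
    ∃ C : ℝ, 0 < C ∧
      ∀ (A : Type)
        (a : A → EuclideanSpace ℝ (Fin d) → EuclideanSpace ℝ (Fin d) → ℝ)
        (f : A → EuclideanSpace ℝ (Fin d) → ℝ)
        (u : EuclideanSpace ℝ (Fin d) → ℝ) (ωf : ℝ → ℝ) (p H B : ℝ),
        (∀ β x y, a β x y ∈ Set.Icc lam Lam) →
        (∀ β x, Measurable (a β x)) →
        (∀ β x x' y, x ≠ x' → |a β x y - a β x' y| ≤ Lam * ωa ‖x - x'‖) →
        IsDini ωf →
        (∀ β (x x' : EuclideanSpace ℝ (Fin d)), x ≠ x' → |f β x - f β x'| ≤ ωf ‖x - x'‖) →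
        0 < B → (∀ x, |u x| ≤ B) →
        ∑' k : ℕ, ωf ((1/2) ^ (k + 1)) ≤ B →
        σ < p → 0 ≤ H → Measurable u →
        (∀ x y, |u x - u y| ≤ H * ‖x - y‖ ^ p) →
        (∀ x : EuclideanSpace ℝ (Fin d),
          IsGLB {v : ℝ | ∃ β, v =
            (∫ y, (u (x + y) - u x) * a β x y * ‖y‖ ^ (-(d:ℝ) - σ)) + f β x} 0) →
        ∀ x z, x ≠ z → u x - u z ≤ C * B * ‖x - z‖ ^ σ := by
  have hne : Nonempty (Fin d) := ⟨⟨0, hd⟩⟩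
  obtain ⟨hσ0, hσ1⟩ := hσ
  have hLam : 0 < Lam := hlam.trans_le hlamLam
  obtain ⟨κ, hκ, hκσ, hκ1⟩ : ∃ κ : ℝ, 0 < κ ∧ κ < σ ∧ σ + κ < 1 := by
    refine ⟨min σ (1 - σ) / 2, ?_, ?_, ?_⟩
    · have : 0 < min σ (1 - σ) := lt_min hσ0 (by linarith)
      linarith
    · linarith [min_le_left σ (1 - σ)]
    · linarith [min_le_right σ (1 - σ)]
  obtain ⟨c, hc0, hc1, hc⟩ := gfun_second_diff hκ hκσ hκ1
  obtain ⟨C1, hC10, hC1⟩ := gfun_integral hd (σ := σ) hκ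
  set v1 := volume.real (ball (0 : EuclideanSpace ℝ (Fin d)) 1) with hv1
  have hv1pos : 0 < v1 := by
    rw [hv1, measureReal_def]
    exact ENNReal.toReal_pos (measure_ball_pos _ _ one_pos).ne' measure_ball_lt_top.ne
  obtain ⟨c0, hc0def⟩ : ∃ c0, c0 = c / 4 * ((1/16) ^ d * v1) := ⟨_, rfl⟩
  have hc0pos : 0 < c0 := by rw [hc0def]; positivity
  obtain ⟨θ, hθdef⟩ : ∃ θ, θ = c0 * lam / (16 * Lam * C1 + 1) := ⟨_, rfl⟩
  have hθ : 0 < θ := by rw [hθdef]; positivity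
  have hθ2 : 16 * Lam * C1 * θ ≤ c0 * lam := by
    have : θ * (16 * Lam * C1 + 1) = c0 * lam := by
      rw [hθdef]; exact div_mul_cancel₀ _ (by positivity)
    linarith
  obtain ⟨ba, hbadef⟩ : ∃ ba : ℕ → ℝ, ba = fun n => ωa ((1/2) ^ (n + 1)) + 1 / ((n + 1 : ℕ) : ℝ) ^ 2 :=
    ⟨_, rfl⟩
  have hba : Summable ba := by
    rw [hbadef]
    exact (dini_summable hωa).add ((summable_nat_add_iff 1).2 (Real.summable_one_div_nat_pow.2 one_lt_two))
  obtain ⟨k0, hk0⟩ : ∃ k0, ∑' n, ba (n + k0) ≤ θ := by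
    have := (tendsto_sum_nat_add ba).eventually (eventually_lt_nhds hθ)
    obtain ⟨k0, h⟩ := this.exists
    exact ⟨k0, h.le⟩
  obtain ⟨τ, hτdef⟩ : ∃ τ : ℕ → ℝ, τ = fun n => (1/2) ^ (n + k0 + 1) := ⟨_, rfl⟩
  have hτ : ∀ n, 0 < τ n := fun n => by rw [hτdef]; positivity
  have hτsucc : ∀ n, τ (n + 1) = τ n / 2 := fun n => by simp only [hτdef]; ring
  obtain ⟨φm, hφmdef⟩ : ∃ φm : ℝ, φm = 1 / ((k0 + 1 : ℕ) : ℝ) ^ 2 * (τ 0 ^ σ / 2) := ⟨_, rfl⟩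
  have hφm : 0 < φm := by
    have := hτ 0
    rw [hφmdef]; positivity
  obtain ⟨mm, hmmdef⟩ : ∃ mm, mm = 8 / (θ * c0 * lam) + 2 / φm := ⟨_, rfl⟩
  have hmm : 0 < mm := by rw [hmmdef]; positivity
  refine ⟨mm * (2 * θ), by positivity, ?_⟩
  intro A a f u ωf p H B ha ham hac hωf hf hB huB hsumf hp hH hum hHol hsol
  obtain ⟨b, hbdef⟩ : ∃ b : ℕ → ℝ, b = fun n => ba (n + k0) + θ / B * ωf (τ n) := ⟨_, rfl⟩
  have hfs := dini_summable hωf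
  have hωf0 : ∀ n, 0 ≤ ωf (τ n) := fun n => hωf.1 _ (hτ n)
  have hfs' : Summable (fun n => ωf (τ n)) := by
    rw [hτdef]; exact (summable_nat_add_iff k0).2 hfs
  have hfs'' : ∑' n, ωf (τ n) ≤ B := by
    refine le_trans ?_ hsumf
    rw [hτdef, ← hfs.sum_add_tsum_nat_add k0]
    exact le_add_of_nonneg_left (Finset.sum_nonneg fun i _ => hωf.1 _ (by positivity))
  have hba' : Summable (fun n => ba (n + k0)) := (summable_nat_add_iff k0).2 hba
  have hωa0 : ∀ n, 0 ≤ ωa (τ n) := fun n => hωa.1 _ (hτ n)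
  have hban : ∀ n, ba (n + k0) = ωa (τ n) + 1 / ((n + k0 + 1 : ℕ) : ℝ) ^ 2 := fun n => by
    rw [hbadef, hτdef]
  have hθB : 0 < θ / B := by positivity
  have hb1 : ∀ n, ωa (τ n) ≤ b n := fun n => by
    simp only [hbdef, hban]
    have := hωf0 n
    have : 0 ≤ θ / B * ωf (τ n) := by positivity
    have : (0:ℝ) ≤ 1 / ((n + k0 + 1 : ℕ) : ℝ) ^ 2 := by positivity
    linarith
  have hb2 : ∀ n, 1 / ((n + k0 + 1 : ℕ) : ℝ) ^ 2 ≤ b n := fun n => by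
    simp only [hbdef, hban]
    have := hωf0 n
    have : 0 ≤ θ / B * ωf (τ n) := by positivity
    have := hωa0 n
    linarith
  have hb3 : ∀ n, ωf (τ n) ≤ B / θ * b n := fun n => by
    simp only [hbdef, hban]
    have := hωa0 n
    have h3 : (0:ℝ) ≤ 1 / ((n + k0 + 1 : ℕ) : ℝ) ^ 2 := by positivity
    have h4 : ωf (τ n) = B / θ * (θ / B * ωf (τ n)) := by field_simp
    calc ωf (τ n) = B / θ * (θ / B * ωf (τ n)) := h4
      _ ≤ _ := by
        apply mul_le_mul_of_nonneg_left _ (by positivity)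
        linarith
  have hb : ∀ n, 0 ≤ b n := fun n => (hωa0 n).trans (hb1 n)
  have hs : Summable b := by rw [hbdef]; exact hba'.add (hfs'.mul_left _)
  have hbsum : ∑' n, b n ≤ 2 * θ := by
    rw [hbdef, hba'.tsum_add (hfs'.mul_left _), tsum_mul_left]
    have : θ / B * ∑' n, ωf (τ n) ≤ θ / B * B := mul_le_mul_of_nonneg_left hfs'' hθB.le
    rw [div_mul_cancel₀ _ hB.ne'] at this
    linarith
  have hbsum0 : 0 ≤ ∑' n, b n := tsum_nonneg hb
  set φ : ℝ → ℝ := phi σ κ b τ with hφdef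
  have hφmono : ∀ r r' : ℝ, 0 < r → r ≤ r' → φ r ≤ φ r' := fun r r' hr h =>
    phi_mono hκ hκσ hb hs hτ hr h
  have hκ1' : κ ≤ 1 := by linarith
  have hφlow : ∀ (r : ℝ) n, 0 < r → τ n / 2 ≤ r → r ≤ τ n → b n * (r ^ σ / 2) ≤ φ r :=
    fun r n hr h1 h2 => phi_lower hκ hκ1' hb hs hτ hr n h1 h2
  -- dyadic location
  have hloc : ∀ n0 (r : ℝ), 0 < r → r ≤ τ n0 → ∃ n, n0 ≤ n ∧ τ n / 2 ≤ r ∧ r ≤ τ n := by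
    intro n0 r hr hrt
    obtain ⟨j, hj1, hj2⟩ := exists_nat_pow_near_of_lt_one (x := r / τ n0) (y := (1/2:ℝ))
      (div_pos hr (hτ n0)) ((div_le_one (hτ n0)).2 hrt) (by norm_num) (by norm_num)
    rw [lt_div_iff₀ (hτ n0)] at hj1
    rw [div_le_iff₀ (hτ n0)] at hj2
    have e : τ (n0 + j) = (1/2) ^ j * τ n0 := by simp only [hτdef]; ring
    refine ⟨n0 + j, by omega, ?_, ?_⟩
    · rw [e]; rw [pow_succ] at hj1; linarith
    · rw [e]; exact hj2
  have hφpos : ∀ r : ℝ, 0 < r → 0 < φ r := by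
    intro r hr
    have h0 : 0 < min r (τ 0) := lt_min hr (hτ 0)
    obtain ⟨n, -, h1, h2⟩ := hloc 0 (min r (τ 0)) h0 (min_le_right _ _)
    have hbn : 0 < b n := lt_of_lt_of_le (by positivity) (hb2 n)
    exact lt_of_lt_of_le (by positivity) ((hφlow _ n h0 h1 h2).trans (hφmono _ _ h0 (min_le_left _ _)))
  obtain ⟨M, hMdef⟩ : ∃ M, M = B * mm := ⟨_, rfl⟩
  have hM : 0 < M := by rw [hMdef]; positivity
  have hosc : ∀ x z, u x - u z ≤ 2 * B := fun x z => by
    linarith [(abs_le.1 (huB x)).2, (abs_le.1 (huB z)).1]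
  -- large distances
  have hlarge : ∀ x z, τ 0 ≤ ‖x - z‖ → u x - u z ≤ M * φ ‖x - z‖ := by
    intro x z h
    have h1 : φm ≤ φ ‖x - z‖ := by
      refine le_trans ?_ (hφmono _ _ (hτ 0) h)
      refine le_trans ?_ (hφlow (τ 0) 0 (hτ 0) (by linarith [hτ 0]) le_rfl)
      rw [hφmdef]
      have h2 := hτ 0
      have := hb2 0
      rw [zero_add] at this
      exact mul_le_mul_of_nonneg_right this (by positivity)
    have h2 : 2 * B ≤ M * φm := by
      rw [hMdef, hmmdef]
      have e : B * (8 / (θ * c0 * lam) + 2 / φm) * φm = B * (8 / (θ * c0 * lam)) * φm + 2 * B := by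
        field_simp
      rw [e]
      have : 0 ≤ B * (8 / (θ * c0 * lam)) * φm := by positivity
      linarith
    exact (hosc x z).trans (h2.trans (mul_le_mul_of_nonneg_left h1 hM.le))
  -- small distances
  obtain ⟨n1, hsmall⟩ : ∃ n1, ∀ x z, x ≠ z → ‖x - z‖ ≤ τ n1 → u x - u z ≤ M * φ ‖x - z‖ := by
    have hρ : |(1/2:ℝ) ^ (p - σ)| < 1 := by
      rw [abs_of_nonneg (by positivity)]
      exact Real.rpow_lt_one (by norm_num) (by norm_num) (by linarith)
    have ht := (tendsto_pow_const_mul_const_pow_of_abs_lt_one 2 hρ).const_mul H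
    rw [mul_zero] at ht
    obtain ⟨N, hN⟩ := eventually_atTop.1 (ht.eventually (eventually_lt_nhds (half_pos hM)))
    refine ⟨N, fun x z hxz hr => ?_⟩
    have hr0 : 0 < ‖x - z‖ := norm_pos_iff.2 (sub_ne_zero.2 hxz)
    obtain ⟨n, hn, h1, h2⟩ := hloc N _ hr0 hr
    have hNn := hN (n + k0 + 1) (by omega)
    have hlow := hφlow _ n hr0 h1 h2
    set r := ‖x - z‖ with hrdef
    have e1 : r ^ p = r ^ σ * r ^ (p - σ) := by rw [← Real.rpow_add hr0]; congr 1; ring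
    have e2 : r ^ (p - σ) ≤ ((1/2:ℝ) ^ (p - σ)) ^ (n + k0 + 1) := by
      rw [← Real.rpow_natCast, ← Real.rpow_mul (by norm_num), mul_comm, Real.rpow_mul (by norm_num),
        Real.rpow_natCast]
      apply Real.rpow_le_rpow hr0.le _ (by linarith)
      rw [hτdef] at h2; exact h2
    have hNpos : (0:ℝ) < ((n + k0 + 1 : ℕ) : ℝ) ^ 2 := by positivity
    have e3 : H * ((1/2:ℝ) ^ (p - σ)) ^ (n + k0 + 1) ≤ M / 2 * (1 / ((n + k0 + 1 : ℕ) : ℝ) ^ 2) := by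
      rw [mul_one_div, le_div_iff₀ hNpos]
      linarith
    have hrs : 0 ≤ r ^ σ := by positivity
    calc u x - u z ≤ H * r ^ p := (le_abs_self _).trans (hHol x z)
      _ = r ^ σ * (H * r ^ (p - σ)) := by rw [e1]; ring
      _ ≤ r ^ σ * (M / 2 * b n) := by
        apply mul_le_mul_of_nonneg_left _ hrs
        refine (mul_le_mul_of_nonneg_left e2 hH).trans (e3.trans ?_)
        exact mul_le_mul_of_nonneg_left (hb2 n) (by positivity)
      _ = M * (b n * (r ^ σ / 2)) := by ring
      _ ≤ M * φ r := mul_le_mul_of_nonneg_left hlow hM.le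
  -- main claim
  have main : ∀ x z, x ≠ z → u x - u z ≤ M * φ ‖x - z‖ := by
    by_contra! hcon
    obtain ⟨x0, z0, hxz0, hbad⟩ := hcon
    set S : Set ℝ := {s | ∃ x z, x ≠ z ∧ s = (u x - u z) / φ ‖x - z‖} with hS
    have hpos : ∀ {x z : EuclideanSpace ℝ (Fin d)}, x ≠ z → 0 < ‖x - z‖ := fun h =>
      norm_pos_iff.2 (sub_ne_zero.2 h)
    have hbdd : BddAbove S := by
      refine ⟨max M (2 * B / φ (τ n1)), ?_⟩
      rintro s ⟨x, z, hxz, rfl⟩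
      have hφp := hφpos _ (hpos hxz)
      rcases le_total ‖x - z‖ (τ n1) with h | h
      · apply le_max_of_le_left
        rw [div_le_iff₀ hφp]; exact hsmall x z hxz h
      · apply le_max_of_le_right
        exact div_le_div₀ (by positivity) (hosc x z) (hφpos _ (hτ n1)) (hφmono _ _ (hτ n1) h)
    set M0 := sSup S with hM0def
    have hM0M : M < M0 := by
      refine lt_of_lt_of_le ?_ (le_csSup hbdd ⟨x0, z0, hxz0, rfl⟩)
      rw [lt_div_iff₀ (hφpos _ (hpos hxz0))]; exact hbad
    have hM0 : 0 < M0 := hM.trans hM0M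
    have hup : ∀ x z, x ≠ z → u x - u z ≤ M0 * φ ‖x - z‖ := by
      intro x z hxz
      rw [← div_le_iff₀ (hφpos _ (hpos hxz))]
      exact le_csSup hbdd ⟨x, z, hxz, rfl⟩
    have hΦ1 := hφpos _ (hτ 0)
    have hΦ0 := hφpos _ (hτ n1)
    -- choice of η
    have hT := small_integral hd (σ := σ) (p := p) (H := 2 * H) hσ0 hp (by positivity)
    have hid : Tendsto (fun η : ℝ => η) (𝓝[>] 0) (𝓝 0) := nhdsWithin_le_nhds
    have hT2 := hid.add (hT.const_mul Lam)
    rw [mul_zero, add_zero] at hT2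
    have hτ0 := hτ 0
    have hmargin : 0 < lam * c0 / 2 * M0 * (φ (τ n1) * τ 0 ^ (-σ)) := by positivity
    have ev1 := hT2.eventually (eventually_lt_nhds hmargin)
    have ev2 := hid.eventually (eventually_lt_nhds
      (by have := sub_pos.2 hM0M; positivity : 0 < (M0 - M) * φ (τ 0)))
    have ev3 := hid.eventually (eventually_lt_nhds (by positivity : 0 < c * M0 * φ (τ n1) / 4))
    have ev4 : ∀ᶠ η : ℝ in 𝓝[>] 0, 0 < η := self_mem_nhdsWithin
    obtain ⟨η, ⟨⟨h1, h2⟩, h3⟩, h4⟩ := (((ev1.and ev2).and ev3).and ev4).exists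
    -- choice of points
    have hη' : M0 - η / φ (τ 0) < sSup S := by
      have : 0 < η / φ (τ 0) := by positivity
      rw [← hM0def]; linarith
    have hSne : S.Nonempty := ⟨_, ⟨x0, z0, hxz0, rfl⟩⟩
    obtain ⟨s, ⟨x, z, hxz, rfl⟩, hs1⟩ := exists_lt_of_lt_csSup hSne hη'
    have hr0 := hpos hxz
    have hφr := hφpos _ hr0
    have hMlt : M * φ ‖x - z‖ < u x - u z := by
      rw [← lt_div_iff₀ hφr]
      refine lt_trans ?_ hs1
      have : η / φ (τ 0) < M0 - M := by rw [div_lt_iff₀ hΦ1]; exact h2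
      linarith
    have hr1 : ‖x - z‖ ≤ τ 0 := by
      by_contra! h
      exact absurd (hlarge x z h.le) (not_le.2 hMlt)
    have hr2 : τ n1 ≤ ‖x - z‖ := by
      by_contra! h
      exact absurd (hsmall x z hxz h.le) (not_le.2 hMlt)
    have hφ1 := hφmono _ _ hr0 hr1
    have hφ0 := hφmono _ _ (hτ n1) hr2
    have hconη : M0 * φ ‖x - z‖ - η ≤ u x - u z := by
      rw [lt_div_iff₀ hφr, sub_mul] at hs1
      have : η / φ (τ 0) * φ ‖x - z‖ ≤ η := by
        rw [div_mul_eq_mul_div, div_le_iff₀ hΦ1]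
        exact mul_le_mul_of_nonneg_left hφ1 h4.le
      linarith
    obtain ⟨n, -, hn1, hn2⟩ := hloc 0 _ hr0 hr1
    have hlow := hφlow _ n hr0 hn1 hn2
    -- choice of β
    obtain ⟨v, ⟨β, rfl⟩, hvη⟩ : ∃ v ∈ {v : ℝ | ∃ β, v =
            (∫ y, (u (z + y) - u z) * a β z y * ‖y‖ ^ (-(d:ℝ) - σ)) + f β z}, v < η := by
      by_contra! h
      have := (hsol z).2 (show η ∈ lowerBounds _ from fun v hv => h v hv)
      linarith
    have hx := (hsol x).1 ⟨β, rfl⟩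
    have hfx := (abs_le.1 (hf β x z hxz)).2
    have hωar : 0 ≤ ωa ‖x - z‖ := hωa.1 _ hr0
    have hJ := phi_integral (M0 := M0) hκ hb hs hτ hC10 hM0.le hC1 (Q := fun y => u (z + y) - u z)
      (by
        intro y hy
        have q1 := hup (z + y) z (by simpa using hy)
        have q2 := hup z (z + y) (by simpa using hy)
        rw [add_sub_cancel_left] at q1
        rw [sub_add_cancel_left, norm_neg] at q2
        exact abs_le.2 ⟨by simp only [hφdef] at q2; linarith, q1⟩)
      (by simp) (integrable_delta hd hσ0 hp hH hum huB hHol z)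
    have hct := contact hd (W := Lam * ωa ‖x - z‖) hσ0 hp hH hlam h4 (by positivity) hum huB hHol
      (ham β x) (ham β z) (ha β x) (ha β z) (fun y => hac β x z y hxz) (φ := φ) hup hM0.le hxz
      (fun t ht1 ht2 => phi_second_diff hκ hb hs hτ hc hr0 ht1 ht2) hconη
      (h3.le.trans (by
        have := mul_le_mul_of_nonneg_left hφ0 (by positivity : 0 ≤ c * M0)
        linarith)) hJ
    set r := ‖x - z‖ with hrdef
    have hrσ : r ^ σ * r ^ (-σ) = 1 := by rw [← Real.rpow_add hr0]; simp
    have hrσ0 : 0 < r ^ (-σ) := by positivity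
    obtain ⟨ψ, hψ⟩ : ∃ ψ, ψ = φ r * r ^ (-σ) := ⟨_, rfl⟩
    have hψ0 : 0 < ψ := by rw [hψ]; positivity
    have hbψ : b n ≤ 2 * ψ := by
      have := mul_le_mul_of_nonneg_right hlow hrσ0.le
      rw [← hψ] at this
      have e : b n * (r ^ σ / 2) * r ^ (-σ) = b n / 2 := by
        linear_combination (b n / 2) * hrσ
      linarith
    have hωa1 : ωa r ≤ 2 * ψ := (hωa.2.1 hr0 (hτ n) hn2).trans ((hb1 n).trans hbψ)
    have hωf1 : ωf r ≤ lam * c0 / 4 * M0 * ψ := by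
      refine (hωf.2.1 hr0 (hτ n) hn2).trans ((hb3 n).trans ?_)
      have g1 : B / θ * b n ≤ B / θ * (2 * ψ) := mul_le_mul_of_nonneg_left hbψ (by positivity)
      have g2 : 8 * B / (θ * c0 * lam) ≤ M0 := by
        refine le_trans ?_ hM0M.le
        rw [hMdef, hmmdef, mul_add, mul_div_assoc']
        have : 0 ≤ B * (2 / φm) := by positivity
        rw [mul_comm 8 B]
        linarith
      have g3 : B / θ * (2 * ψ) = lam * c0 / 4 * (8 * B / (θ * c0 * lam)) * ψ := by
        field_simp; ring
      rw [g3] at g1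
      refine g1.trans ?_
      gcongr
    have hWJ : Lam * ωa r * (M0 * (C1 * ∑' n, b n)) ≤ lam * c0 / 4 * M0 * ψ := by
      calc Lam * ωa r * (M0 * (C1 * ∑' n, b n)) ≤ Lam * (2 * ψ) * (M0 * (C1 * (2 * θ))) := by
            gcongr
        _ = (16 * Lam * C1 * θ) * (M0 * ψ / 4) := by ring
        _ ≤ (c0 * lam) * (M0 * ψ / 4) := by gcongr
        _ = _ := by ring
    have hmain : lam * c * M0 * φ r / 4 * ((1/16) ^ d * v1 * r ^ (-σ)) = lam * c0 * M0 * ψ := by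
      rw [hc0def, hψ]; ring
    have hψlow : φ (τ n1) * τ 0 ^ (-σ) ≤ ψ := by
      rw [hψ]
      apply mul_le_mul hφ0 _ (by positivity) hφr.le
      exact Real.rpow_le_rpow_of_nonpos hr0 hr1 (by linarith)
    have hψlow2 : lam * c0 / 2 * M0 * (φ (τ n1) * τ 0 ^ (-σ)) ≤ lam * c0 / 2 * M0 * ψ :=
      mul_le_mul_of_nonneg_left hψlow (by positivity)
    rw [hmain] at hct
    linarith
  intro x z hxz
  have hr0 : 0 < ‖x - z‖ := norm_pos_iff.2 (sub_ne_zero.2 hxz)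
  refine (main x z hxz).trans ?_
  calc M * φ ‖x - z‖ ≤ M * ((2 * θ) * ‖x - z‖ ^ σ) := by
        apply mul_le_mul_of_nonneg_left _ hM.le
        exact (phi_le hκ hb hs hτ hr0).trans (mul_le_mul_of_nonneg_right hbsum (by positivity))
    _ = _ := by rw [hMdef]; ring

/-- Global Dini estimate for equations posed in all of `ℝ^d`, `σ ∈ (0,1)`. -/
theorem global_dini_estimate_order_lt_one
    (d : ℕ) (hd : 1 ≤ d) (σ lam Lam : ℝ)
    (hσ : σ ∈ Set.Ioo (0:ℝ) 1) (hlam : 0 < lam) (hlamLam : lam ≤ Lam)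
    (ωa : ℝ → ℝ) (hωa : IsDini ωa) :
    ∃ C : ℝ, 0 < C ∧
      ∀ (A : Type) [Nonempty A]
        (a : A → EuclideanSpace ℝ (Fin d) → EuclideanSpace ℝ (Fin d) → ℝ)
        (f : A → EuclideanSpace ℝ (Fin d) → ℝ)
        (u : EuclideanSpace ℝ (Fin d) → ℝ) (ωf : ℝ → ℝ) (ε : ℝ),
        -- (a) ellipticity, measurability in `y`, Dini continuity of the coefficients
        (∀ β x y, a β x y ∈ Set.Icc lam Lam) →
        (∀ β x, Measurable (a β x)) →
        (∀ β x x' y, x ≠ x' → |a β x y - a β x' y| ≤ Lam * ωa ‖x - x'‖) →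
        -- (b) Dini continuity of the data
        IsDini ωf →
        (∀ β (x x' : EuclideanSpace ℝ (Fin d)), x ≠ x' → |f β x - f β x'| ≤ ωf ‖x - x'‖) →
        -- (c) regularity of `u`
        (∃ M : ℝ, ∀ x, |u x| ≤ M) →
        ε ∈ Set.Ioo (0:ℝ) (1 - σ) →
        holderSemi (σ + ε) (Set.univ : Set (EuclideanSpace ℝ (Fin d))) u < ⊤ →
        -- absolute integrability of the integrand of `L_β u`
        (∀ β (x : EuclideanSpace ℝ (Fin d)),
          Integrable (fun y => (u (x + y) - u x) * a β x y * ‖y‖ ^ (-(d:ℝ) - σ))) →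
        -- (d) `u` solves `inf_β (L_β u + f_β) = 0` in all of `ℝ^d`
        (∀ x : EuclideanSpace ℝ (Fin d),
          IsGLB {v : ℝ | ∃ β, v =
            (∫ y, (u (x + y) - u x) * a β x y * ‖y‖ ^ (-(d:ℝ) - σ)) + f β x} 0) →
        -- conclusion
        holderSemi σ (Set.univ : Set (EuclideanSpace ℝ (Fin d))) u ≤
          ENNReal.ofReal C * eSupNorm (Set.univ) u
          + ENNReal.ofReal C * ∑' k : ℕ, ENNReal.ofReal (ωf (2 ^ (-((k:ℝ) + 1)))) := by
  obtain ⟨C, hC, hcore⟩ := core_estimate d hd σ lam Lam hσ hlam hlamLam ωa hωa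
  refine ⟨C, hC, ?_⟩
  intro A _ a f u ωf ε ha ham hac hωf hf hb hε hH _ hGLB
  obtain ⟨M, hM⟩ := hb
  have hS := dini_summable hωf
  have hω0 : ∀ k : ℕ, 0 ≤ ωf ((1/2) ^ (k + 1)) := fun k => hωf.1 _ (by positivity)
  have hpow : ∀ k : ℕ, (2:ℝ) ^ (-((k:ℝ) + 1)) = (1/2) ^ (k + 1) := by
    intro k
    rw [Real.rpow_neg (by norm_num), one_div, inv_pow]
    congr 1
    exact_mod_cast Real.rpow_natCast (2:ℝ) (k + 1)
  simp only [hpow]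
  rw [← ENNReal.ofReal_tsum_of_nonneg hω0 hS]
  set T := ∑' k : ℕ, ωf ((1/2) ^ (k + 1)) with hT
  have hT0 : 0 ≤ T := tsum_nonneg hω0
  have hNtop : eSupNorm (Set.univ) u ≠ ⊤ := by
    refine ne_top_of_le_ne_top (ENNReal.ofReal_ne_top (r := M)) ?_
    exact iSup_le fun x => iSup_le fun _ => ENNReal.ofReal_le_ofReal (hM x)
  obtain ⟨N, hN0, hN⟩ : ∃ N : ℝ, 0 ≤ N ∧ eSupNorm (Set.univ) u = ENNReal.ofReal N :=
    ⟨_, ENNReal.toReal_nonneg, (ENNReal.ofReal_toReal hNtop).symm⟩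
  have huN : ∀ x, |u x| ≤ N := by
    intro x
    have h : ENNReal.ofReal |u x| ≤ eSupNorm (Set.univ) u :=
      le_iSup₂_of_le (f := fun (x : EuclideanSpace ℝ (Fin d)) (_ : x ∈ Set.univ) =>
        ENNReal.ofReal |u x|) x (Set.mem_univ _) le_rfl
    rw [hN] at h
    exact (ENNReal.ofReal_le_ofReal_iff hN0).1 h
  obtain ⟨H, hH0, hHeq⟩ : ∃ H : ℝ, 0 ≤ H ∧
      holderSemi (σ + ε) (Set.univ : Set (EuclideanSpace ℝ (Fin d))) u = ENNReal.ofReal H :=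
    ⟨_, ENNReal.toReal_nonneg, (ENNReal.ofReal_toReal hH.ne).symm⟩
  have hpp : 0 < σ + ε := add_pos hσ.1 hε.1
  have hHol : ∀ x y, |u x - u y| ≤ H * ‖x - y‖ ^ (σ + ε) := by
    intro x y
    by_cases hxy : x = y
    · subst hxy
      simp [Real.zero_rpow hpp.ne']
    have h : ENNReal.ofReal (‖u x - u y‖ / ‖x - y‖ ^ (σ + ε)) ≤
        holderSemi (σ + ε) (Set.univ : Set (EuclideanSpace ℝ (Fin d))) u := by
      unfold holderSemi
      exact le_iSup_of_le x (le_iSup_of_le (Set.mem_univ _) (le_iSup_of_le y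
        (le_iSup_of_le (Set.mem_univ _) (le_iSup_of_le hxy le_rfl))))
    rw [hHeq, ENNReal.ofReal_le_ofReal_iff hH0] at h
    have hpos : 0 < ‖x - y‖ ^ (σ + ε) := Real.rpow_pos_of_pos (norm_pos_iff.2 (sub_ne_zero.2 hxy)) _
    rwa [div_le_iff₀ hpos, Real.norm_eq_abs] at h
  have hcont : Continuous u := by
    rw [continuous_iff_continuousAt]
    intro x
    rw [ContinuousAt, tendsto_iff_norm_sub_tendsto_zero]
    have hg : Tendsto (fun y => H * ‖y - x‖ ^ (σ + ε)) (𝓝 x) (𝓝 0) := by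
      have hc : Continuous (fun y => H * ‖y - x‖ ^ (σ + ε)) :=
        continuous_const.mul ((continuous_id.sub continuous_const).norm.rpow_const
          (fun _ => Or.inr hpp.le))
      have := hc.tendsto x
      simpa [Real.zero_rpow hpp.ne'] using this
    exact squeeze_zero (fun _ => norm_nonneg _) (fun y => hHol y x) hg
  have key : ∀ x z, x ≠ z → u x - u z ≤ C * (N + T) * ‖x - z‖ ^ σ := by
    intro x z hxz
    have hlim : Tendsto (fun δ : ℝ => C * (N + T + δ) * ‖x - z‖ ^ σ) (𝓝[>] 0)
        (𝓝 (C * (N + T) * ‖x - z‖ ^ σ)) := by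
      have hc : Continuous (fun δ : ℝ => C * (N + T + δ) * ‖x - z‖ ^ σ) := by fun_prop
      have := (hc.tendsto 0).mono_left (nhdsWithin_le_nhds (s := Set.Ioi (0:ℝ)))
      simpa using this
    refine ge_of_tendsto hlim ?_
    filter_upwards [self_mem_nhdsWithin] with δ hδ
    have hδ' : 0 < δ := hδ
    exact hcore A a f u ωf (σ + ε) H (N + T + δ) ha ham hac hωf hf (by positivity)
      (fun x => (huN x).trans (by linarith)) (by rw [← hT]; linarith) (by linarith [hε.1]) hH0
      hcont.measurable hHol hGLB x z hxz
  have hfin : ENNReal.ofReal C * eSupNorm (Set.univ) u + ENNReal.ofReal C * ENNReal.ofReal T =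
      ENNReal.ofReal (C * (N + T)) := by
    rw [hN, ← ENNReal.ofReal_mul hC.le, ← ENNReal.ofReal_mul hC.le,
      ← ENNReal.ofReal_add (by positivity) (by positivity), mul_add]
  rw [hfin]
  unfold holderSemi
  refine iSup_le fun x => iSup_le fun _ => iSup_le fun z => iSup_le fun _ => iSup_le fun hxz => ?_
  refine ENNReal.ofReal_le_ofReal ?_
  have hpos : 0 < ‖x - z‖ ^ σ := Real.rpow_pos_of_pos (norm_pos_iff.2 (sub_ne_zero.2 hxz)) _
  rw [div_le_iff₀ hpos, Real.norm_eq_abs, abs_le]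
  have h2 := key z x (Ne.symm hxz)
  rw [norm_sub_rev] at h2
  exact ⟨by linarith, key x z hxz⟩
end
end
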